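/- Let α ∈ (0,∞) and let 2 ≤ q, r ≤ ∞ satisfy 3/q + 1/r ≤ 1/2 if α ∈ (1,∞), and 2/q + 1/r ≤ 1/2 if α ∈ (0,1]. Then there exists a constant C > 0 such that (∫_ℝ ‖U(t)φ‖_{ℓ^r(Z)}^q dt)^{1/q} ≤ C ‖φ‖_{ℓ²(Z)} for all φ ∈ ℓ²(Z) (with the essential-supremum interpretation when q = ∞). -/

import Mathlib

open scoped BigOperators ENNReal
open Filter Topology MeasureTheory

noncomputable section

/-- The symbol `σ(ξ) = Σ_{k=1}^∞ sin²(kξ/2) / k^{1+α}` for `J_k = k^{-(1+α)}` on `ℤ`. -/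
def sigma1 (α : ℝ) (ξ : ℝ) : ℝ :=
  ∑' k : ℕ, Real.sin (((k : ℝ) + 1) * ξ / 2) ^ 2 / ((k : ℝ) + 1) ^ (1 + α)

/-- The kernel `(K_t)_n = (1/(2π)) ∫_{-π}^{π} e^{i(nξ - σ(ξ)t)} dξ`. -/
def Kker (α t : ℝ) (n : ℤ) : ℂ :=
  (2 * Real.pi)⁻¹ •
    ∫ ξ in (-Real.pi)..Real.pi, Complex.exp (Complex.I * (((n : ℝ) * ξ - sigma1 α ξ * t) : ℝ))

/-- The propagator `(U(t)φ)_n = Σ_m (K_t)_{n-m} φ_m`. -/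
def Uprop (α t : ℝ) (φ : ℤ → ℂ) (n : ℤ) : ℂ :=
  ∑' m : ℤ, Kker α t (n - m) * φ m

/-- The `ℓ^r(ℤ)` norm for `r ∈ [1,∞]`, valued in `ℝ≥0∞`. -/
def lrNormZ (r : ℝ≥0∞) (g : ℤ → ℂ) : ℝ≥0∞ :=
  if r = ⊤ then ⨆ n : ℤ, (‖g n‖₊ : ℝ≥0∞)
  else (∑' n : ℤ, (‖g n‖₊ : ℝ≥0∞) ^ r.toReal) ^ (1 / r.toReal)

/-- The space-time norm `‖u‖_{L^q_t ℓ^r}` over `t ∈ ℝ`, valued in `ℝ≥0∞`. -/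
def LqLrNorm (q r : ℝ≥0∞) (u : ℝ → ℤ → ℂ) : ℝ≥0∞ :=
  if q = ⊤ then essSup (fun t : ℝ => lrNormZ r (u t)) volume
  else (∫⁻ t : ℝ, (lrNormZ r (u t)) ^ q.toReal) ^ (1 / q.toReal)

/-!
The second derivative of `2σ` is formally `∑ k^{1-α} cos kξ`. For `α > 1` the coefficients
`k^{1-α}` are a multiple of `∫₀^∞ x^{α-2} e^{-kx} dx`, so this series is a positive superposition of
the sums `∑ e^{-kx} cos kξ`, which are half Poisson kernels minus `1/2` and hence decreasing on
`[0, π]`: the symbol has a single inflection point there, where `σ''` changes sign at a linear rate.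
For `α < 1` the coefficients are a multiple of `∫₀^∞ x^{α-2} (1 - e^{-kx}) dx`, and positivity of
the Poisson kernel makes `σ` uniformly concave on `[0, π]`; for `α = 1` it is an explicit parabola.
Van der Corput's lemma then bounds `K_t` by a multiple of `|t|^{-ρ}`, with `ρ = 1/3` and `ρ = 1/2`
respectively. The integrals over `x` are truncated to `x > δ` so that all series converge
absolutely; the decay bounds are uniform in `δ`.

At the endpoint `(q, r) = (2/ρ, ∞)`, choosing for each `t` a site `n(t)` that nearly attains the
supremum linearises the `ℓ^∞` norm, and the `TT*` argument reduces the estimate to the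
Hardy–Littlewood–Sobolev inequality for the kernel `|t - s|^{-ρ}`. Interpolating with the
conservation of the `ℓ²` norm gives all the other pairs.
-/

section

open Set

/-! ### Oscillatory integrals -/

/-- The oscillating factor `e^{i f(x)}` with real phase `f`. -/
def osc (f : ℝ → ℝ) (x : ℝ) : ℂ := Complex.exp (Complex.I * f x)

section Osc

open intervalIntegral

theorem norm_osc (f : ℝ → ℝ) (x : ℝ) : ‖osc f x‖ = 1 := by
  rw [osc, mul_comm, Complex.norm_exp_ofReal_mul_I]

theorem continuousOn_osc {f : ℝ → ℝ} {s : Set ℝ} (hf : ContinuousOn f s) :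
    ContinuousOn (osc f) s := by
  unfold osc; fun_prop

theorem continuous_osc {f : ℝ → ℝ} (hf : Continuous f) : Continuous (osc f) := by
  unfold osc; fun_prop

theorem conj_osc (f : ℝ → ℝ) (x : ℝ) : starRingEnd ℂ (osc f x) = osc (fun y => -f y) x := by
  simp [osc, ← Complex.exp_conj]

theorem norm_integral_osc_le_sub (f : ℝ → ℝ) {a b : ℝ} (hab : a ≤ b) :
    ‖∫ x in a..b, osc f x‖ ≤ b - a := by
  simpa [abs_of_nonneg (sub_nonneg.2 hab)] using
    norm_integral_le_of_norm_le_const (a := a) (b := b) fun x _ => (norm_osc f x).le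

theorem norm_integral_osc_neg (f : ℝ → ℝ) (a b : ℝ) :
    ‖∫ x in a..b, osc (fun y => -f y) x‖ = ‖∫ x in a..b, osc f x‖ := by
  simp_rw [← conj_osc, intervalIntegral_eq_integral_uIoc, integral_conj, norm_smul,
    RCLike.norm_conj]

variable {f f' f'' : ℝ → ℝ} {a b : ℝ}

/-- The phase `f` is twice continuously differentiable on `[a, b]`, with derivatives `f'`, `f''`. -/
structure HasSecondDerivOn (f f' f'' : ℝ → ℝ) (a b : ℝ) : Prop where
  hasDerivAt : ∀ x ∈ Icc a b, HasDerivAt f (f' x) x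
  hasDerivAt' : ∀ x ∈ Icc a b, HasDerivAt f' (f'' x) x
  continuousOn : ContinuousOn f'' (Icc a b)

namespace HasSecondDerivOn

theorem mono (h : HasSecondDerivOn f f' f'' a b) {c d : ℝ} (hac : a ≤ c) (hdb : d ≤ b) :
    HasSecondDerivOn f f' f'' c d :=
  ⟨fun x hx => h.hasDerivAt x (Icc_subset_Icc hac hdb hx),
    fun x hx => h.hasDerivAt' x (Icc_subset_Icc hac hdb hx),
    h.continuousOn.mono (Icc_subset_Icc hac hdb)⟩

theorem neg (h : HasSecondDerivOn f f' f'' a b) :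
    HasSecondDerivOn (fun x => -f x) (fun x => -f' x) (fun x => -f'' x) a b :=
  ⟨fun x hx => (h.hasDerivAt x hx).fun_neg, fun x hx => (h.hasDerivAt' x hx).fun_neg,
    h.continuousOn.neg⟩

theorem comp_neg (h : HasSecondDerivOn f f' f'' a b) :
    HasSecondDerivOn (fun x => f (-x)) (fun x => -f' (-x)) (fun x => f'' (-x)) (-b) (-a) := by
  have hmem : MapsTo (fun x : ℝ => -x) (Icc (-b) (-a)) (Icc a b) := fun x hx =>
    ⟨le_neg_of_le_neg hx.2, neg_le_of_neg_le hx.1⟩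
  refine ⟨fun x hx => ?_, fun x hx => ?_, h.continuousOn.comp continuousOn_neg hmem⟩
  · exact ((h.hasDerivAt _ (hmem hx)).comp x (hasDerivAt_neg x)).congr_deriv (by ring)
  · exact ((h.hasDerivAt' _ (hmem hx)).comp x (hasDerivAt_neg x)).neg.congr_deriv (by ring)

theorem continuousOn_phase (h : HasSecondDerivOn f f' f'' a b) : ContinuousOn f (Icc a b) :=
  HasDerivAt.continuousOn h.hasDerivAt

theorem continuousOn_deriv (h : HasSecondDerivOn f f' f'' a b) : ContinuousOn f' (Icc a b) :=
  HasDerivAt.continuousOn h.hasDerivAt'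

theorem intervalIntegrable_osc (h : HasSecondDerivOn f f' f'' a b) {c d : ℝ} (hac : a ≤ c)
    (hcd : c ≤ d) (hdb : d ≤ b) : IntervalIntegrable (osc f) volume c d :=
  ((continuousOn_osc h.continuousOn_phase).mono
    (Icc_subset_Icc hac hdb)).intervalIntegrable_of_Icc hcd

theorem add_mul_sub_le_deriv (h : HasSecondDerivOn f f' f'' a b) {lam : ℝ}
    (hlam : ∀ x ∈ Icc a b, lam ≤ f'' x) {x : ℝ} (hx : x ∈ Icc a b) :
    f' a + lam * (x - a) ≤ f' x := by
  have hsub : interior (Icc a b) ⊆ Icc a b := interior_subset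
  have := (convex_Icc a b).mul_sub_le_image_sub_of_le_deriv h.continuousOn_deriv
    (fun y hy => (h.hasDerivAt' y (hsub hy)).differentiableAt.differentiableWithinAt)
    (fun y hy => (h.hasDerivAt' y (hsub hy)).deriv.symm ▸ hlam y (hsub hy))
    a (left_mem_Icc.2 (hx.1.trans hx.2)) x hx hx.1
  linarith

theorem integral_deriv_div_sq (h : HasSecondDerivOn f f' f'' a b) (hab : a ≤ b)
    (hne : ∀ x ∈ Icc a b, f' x ≠ 0) :
    ∫ x in a..b, f'' x / f' x ^ 2 = 1 / f' a - 1 / f' b := by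
  have hderiv : ∀ x ∈ uIcc a b, HasDerivAt (fun y => -(f' y)⁻¹) (f'' x / f' x ^ 2) x := by
    intro x hx
    rw [uIcc_of_le hab] at hx
    exact ((h.hasDerivAt' x hx).fun_inv (hne x hx)).fun_neg.congr_deriv (by ring)
  rw [integral_eq_sub_of_hasDerivAt hderiv]
  · ring
  · exact (h.continuousOn.div (h.continuousOn_deriv.pow 2)
      fun x hx => pow_ne_zero _ (hne x hx)).intervalIntegrable_of_Icc hab

theorem integral_osc_eq (h : HasSecondDerivOn f f' f'' a b) (hab : a ≤ b)
    (hne : ∀ x ∈ Icc a b, f' x ≠ 0) :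
    ∫ x in a..b, osc f x = (f' b : ℂ)⁻¹ * (osc f b / Complex.I)
      - (f' a : ℂ)⁻¹ * (osc f a / Complex.I)
      - ∫ x in a..b, (-(f'' x / f' x ^ 2 : ℝ) : ℂ) * (osc f x / Complex.I) := by
  have hu : ∀ x ∈ uIcc a b, HasDerivAt (fun y => (f' y : ℂ)⁻¹) (-(f'' x / f' x ^ 2 : ℝ) : ℂ) x := by
    intro x hx
    rw [uIcc_of_le hab] at hx
    have := ((h.hasDerivAt' x hx).ofReal_comp).fun_inv (Complex.ofReal_ne_zero.2 (hne x hx))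
    exact this.congr_deriv (by push_cast; ring)
  have hv : ∀ x ∈ uIcc a b, HasDerivAt (fun y => osc f y / Complex.I) (f' x * osc f x) x := by
    intro x hx
    rw [uIcc_of_le hab] at hx
    have := (((h.hasDerivAt x hx).ofReal_comp.const_mul Complex.I).cexp).div_const Complex.I
    refine this.congr_deriv ?_
    rw [osc]; field_simp [Complex.I_ne_zero]
  have hu' : IntervalIntegrable (fun x => (-(f'' x / f' x ^ 2 : ℝ) : ℂ)) volume a b := by
    refine (Complex.continuous_ofReal.comp_continuousOn ?_).neg.intervalIntegrable_of_Icc hab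
    exact h.continuousOn.div (h.continuousOn_deriv.pow 2) fun x hx => pow_ne_zero _ (hne x hx)
  have hv' : IntervalIntegrable (fun x => (f' x : ℂ) * osc f x) volume a b :=
    ((Complex.continuous_ofReal.comp_continuousOn h.continuousOn_deriv).mul
      (continuousOn_osc h.continuousOn_phase)).intervalIntegrable_of_Icc hab
  rw [← integral_mul_deriv_eq_deriv_mul hu hv hu' hv']
  refine integral_congr fun x hx => ?_
  rw [uIcc_of_le hab] at hx
  exact (inv_mul_cancel_left₀ (Complex.ofReal_ne_zero.2 (hne x hx)) _).symm

theorem norm_integral_osc_le_of_deriv_pos (h : HasSecondDerivOn f f' f'' a b) (hab : a ≤ b)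
    (hconv : ∀ x ∈ Icc a b, 0 ≤ f'' x) (ha : 0 < f' a) :
    ‖∫ x in a..b, osc f x‖ ≤ 2 / f' a := by
  have hpos : ∀ x ∈ Icc a b, 0 < f' x := fun x hx =>
    ha.trans_le (by simpa using h.add_mul_sub_le_deriv hconv hx)
  have hne : ∀ x ∈ Icc a b, f' x ≠ 0 := fun x hx => (hpos x hx).ne'
  have hboundary : ∀ x ∈ Icc a b, ‖(f' x : ℂ)⁻¹ * (osc f x / Complex.I)‖ = 1 / f' x := by
    intro x hx
    simp [norm_osc, abs_of_pos (hpos x hx)]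
  have hrest : ‖∫ x in a..b, (-(f'' x / f' x ^ 2 : ℝ) : ℂ) * (osc f x / Complex.I)‖
      ≤ 1 / f' a - 1 / f' b := by
    rw [← h.integral_deriv_div_sq hab hne]
    refine (intervalIntegral.norm_integral_le_integral_norm hab).trans_eq
      (integral_congr fun x hx => ?_)
    rw [uIcc_of_le hab] at hx
    simp [norm_osc, abs_of_nonneg (hconv x hx)]
  rw [h.integral_osc_eq hab hne]
  calc _ ≤ 1 / f' b + 1 / f' a + (1 / f' a - 1 / f' b) := by
        refine (norm_sub_le _ _).trans (add_le_add ((norm_sub_le _ _).trans_eq ?_) hrest)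
        rw [hboundary a (left_mem_Icc.2 hab), hboundary b (right_mem_Icc.2 hab)]
    _ = 2 / f' a := by ring

theorem norm_integral_osc_le_of_deriv_nonneg (h : HasSecondDerivOn f f' f'' a b) (hab : a ≤ b)
    {lam : ℝ} (hlam : 0 < lam) (hconv : ∀ x ∈ Icc a b, lam ≤ f'' x) (ha : 0 ≤ f' a) :
    ‖∫ x in a..b, osc f x‖ ≤ 3 / √lam := by
  have hs : 0 < √lam := Real.sqrt_pos.2 hlam
  obtain hshort | hlong := le_or_gt b (a + 1 / √lam)
  · calc _ ≤ b - a := norm_integral_osc_le_sub f hab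
      _ ≤ 1 / √lam := by linarith
      _ ≤ 3 / √lam := by gcongr; norm_num
  set c := a + 1 / √lam with hc
  have hac : a ≤ c := by rw [hc]; linarith [one_div_pos.2 hs]
  have hderiv : √lam ≤ f' c := by
    have := h.add_mul_sub_le_deriv hconv ⟨hac, hlong.le⟩
    have hmul : lam * (c - a) = √lam := by
      rw [hc, add_sub_cancel_left, mul_one_div, Real.div_sqrt]
    linarith
  rw [← integral_add_adjacent_intervals (h.intervalIntegrable_osc le_rfl hac hlong.le)
    (h.intervalIntegrable_osc hac hlong.le le_rfl)]
  calc _ ≤ (c - a) + 2 / f' c := by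
        refine (norm_add_le _ _).trans (add_le_add (norm_integral_osc_le_sub f hac) ?_)
        exact (h.mono hac le_rfl).norm_integral_osc_le_of_deriv_pos hlong.le
          (fun x hx => hlam.le.trans (hconv x ⟨hac.trans hx.1, hx.2⟩)) (hs.trans_le hderiv)
    _ ≤ 1 / √lam + 2 / √lam := by rw [hc, add_sub_cancel_left]; gcongr
    _ = 3 / √lam := by ring

theorem norm_integral_osc_le_of_deriv_nonpos (h : HasSecondDerivOn f f' f'' a b) (hab : a ≤ b)
    {lam : ℝ} (hlam : 0 < lam) (hconv : ∀ x ∈ Icc a b, lam ≤ f'' x) (hb : f' b ≤ 0) :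
    ‖∫ x in a..b, osc f x‖ ≤ 3 / √lam := by
  have hreflect : ∫ x in a..b, osc f x = ∫ x in -b..-a, osc (fun y => f (-y)) x :=
    (integral_comp_neg (osc f)).symm ▸ by simp
  rw [hreflect]
  exact h.comp_neg.norm_integral_osc_le_of_deriv_nonneg (neg_le_neg hab) hlam
    (fun x hx => hconv _ ⟨le_neg_of_le_neg hx.2, neg_le_of_neg_le hx.1⟩) (by simpa using hb)

theorem norm_integral_osc_le_of_le_deriv2 (h : HasSecondDerivOn f f' f'' a b) (hab : a ≤ b)
    {lam : ℝ} (hlam : 0 < lam) (hconv : ∀ x ∈ Icc a b, lam ≤ f'' x) :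
    ‖∫ x in a..b, osc f x‖ ≤ 6 / √lam := by
  have h36 : 3 / √lam ≤ 6 / √lam := by gcongr; norm_num
  obtain ha | ha := le_or_gt 0 (f' a)
  · exact (h.norm_integral_osc_le_of_deriv_nonneg hab hlam hconv ha).trans h36
  obtain hb | hb := le_or_gt (f' b) 0
  · exact (h.norm_integral_osc_le_of_deriv_nonpos hab hlam hconv hb).trans h36
  obtain ⟨c, hc, hzero⟩ := intermediate_value_Icc hab h.continuousOn_deriv ⟨ha.le, hb.le⟩
  rw [← integral_add_adjacent_intervals (h.intervalIntegrable_osc le_rfl hc.1 hc.2)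
    (h.intervalIntegrable_osc hc.1 hc.2 le_rfl)]
  calc _ ≤ 3 / √lam + 3 / √lam := by
        refine norm_add_le_of_le ?_ ?_
        · exact (h.mono le_rfl hc.2).norm_integral_osc_le_of_deriv_nonpos hc.1 hlam
            (fun x hx => hconv x ⟨hx.1, hx.2.trans hc.2⟩) hzero.le
        · exact (h.mono hc.1 le_rfl).norm_integral_osc_le_of_deriv_nonneg hc.2 hlam
            (fun x hx => hconv x ⟨hc.1.trans hx.1, hx.2⟩) hzero.ge
    _ = 6 / √lam := by ring

theorem norm_integral_osc_le_of_mul_sub_le_deriv2 (h : HasSecondDerivOn f f' f'' a b) (hab : a ≤ b)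
    {K : ℝ} (hK : 0 < K) (hgrow : ∀ x ∈ Icc a b, K * (x - a) ≤ f'' x) :
    ‖∫ x in a..b, osc f x‖ ≤ 7 * K ^ (-(1 / 3) : ℝ) := by
  set e := K ^ (-(1 / 3) : ℝ) with he
  have hepos : 0 < e := Real.rpow_pos_of_pos hK _
  have hsqrt : √(K * e) = e⁻¹ := by
    rw [he, ← Real.rpow_one_add' hK.le (by norm_num), ← Real.rpow_neg hK.le, Real.sqrt_eq_rpow,
      ← Real.rpow_mul hK.le]
    norm_num
  obtain hshort | hlong := le_or_gt b (a + e)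
  · linarith [norm_integral_osc_le_sub f hab]
  have hac : a ≤ a + e := by linarith
  rw [← integral_add_adjacent_intervals (h.intervalIntegrable_osc le_rfl hac hlong.le)
    (h.intervalIntegrable_osc hac hlong.le le_rfl)]
  calc _ ≤ (a + e - a) + 6 / √(K * e) := by
        refine norm_add_le_of_le (norm_integral_osc_le_sub f hac) ?_
        refine (h.mono hac le_rfl).norm_integral_osc_le_of_le_deriv2 hlong.le (by positivity) ?_
        intro x hx
        refine le_trans ?_ (hgrow x ⟨hac.trans hx.1, hx.2⟩)
        gcongr
        linarith [hx.1]
    _ = 7 * e := by rw [hsqrt]; field_simp; ring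

theorem norm_integral_osc_le_of_inflection (h : HasSecondDerivOn f f' f'' a b) {x₀ K : ℝ}
    (hx₀ : x₀ ∈ Icc a b) (hK : 0 < K) (hleft : ∀ x ∈ Icc a x₀, f'' x ≤ -(K * (x₀ - x)))
    (hright : ∀ x ∈ Icc x₀ b, K * (x - x₀) ≤ f'' x) :
    ‖∫ x in a..b, osc f x‖ ≤ 14 * K ^ (-(1 / 3) : ℝ) := by
  have hreflect : ‖∫ x in a..x₀, osc f x‖ = ‖∫ x in -x₀..-a, osc (fun y => -f (-y)) x‖ := by
    rw [norm_integral_osc_neg (fun y => f (-y))]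
    exact congrArg norm ((integral_comp_neg (osc f)).symm ▸ by simp)
  rw [← integral_add_adjacent_intervals (h.intervalIntegrable_osc le_rfl hx₀.1 hx₀.2)
    (h.intervalIntegrable_osc hx₀.1 hx₀.2 le_rfl)]
  calc _ ≤ 7 * K ^ (-(1 / 3) : ℝ) + 7 * K ^ (-(1 / 3) : ℝ) := by
        refine norm_add_le_of_le (hreflect.trans_le ?_) ?_
        · refine (h.mono le_rfl hx₀.2).comp_neg.neg.norm_integral_osc_le_of_mul_sub_le_deriv2
            (neg_le_neg hx₀.1) hK fun x hx => ?_
          linarith [hleft (-x) ⟨le_neg_of_le_neg hx.2, neg_le_of_neg_le hx.1⟩]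
        · exact (h.mono hx₀.1 le_rfl).norm_integral_osc_le_of_mul_sub_le_deriv2 hx₀.2 hK hright
    _ = 14 * K ^ (-(1 / 3) : ℝ) := by ring

end HasSecondDerivOn

end Osc

/-! ### Decay of oscillatory integrals with linear and dispersive phase -/

/-- The integrals of `e^{i(nξ - g(ξ)t)}` over `[a, b]` are at most `C t^{-ρ}`, uniformly in the
frequency `n`. -/
def OscDecay (g : ℝ → ℝ) (a b ρ C : ℝ) : Prop :=
  ∀ n t : ℝ, 0 < t → ‖∫ ξ in a..b, osc (fun ξ => n * ξ - g ξ * t) ξ‖ ≤ C * t ^ (-ρ)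

section OscDecay

variable {g g' g'' : ℝ → ℝ} {a b ρ C : ℝ}

theorem HasSecondDerivOn.linear_sub_mul (h : HasSecondDerivOn g g' g'' a b) (n t : ℝ) :
    HasSecondDerivOn (fun ξ => n * ξ - g ξ * t) (fun ξ => n - g' ξ * t) (fun ξ => -(g'' ξ * t)) a b
    where
  hasDerivAt ξ hξ :=
    (((hasDerivAt_id' ξ).const_mul n).fun_sub ((h.hasDerivAt ξ hξ).mul_const t)).congr_deriv
      (by rw [mul_one])
  hasDerivAt' ξ hξ := ((h.hasDerivAt' ξ hξ).mul_const t).const_sub n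
  continuousOn := (h.continuousOn.mul continuousOn_const).neg

theorem HasSecondDerivOn.oscDecay_of_deriv2_le_neg (h : HasSecondDerivOn g g' g'' a b)
    (hab : a ≤ b) {c : ℝ} (hc : 0 < c) (hconc : ∀ ξ ∈ Icc a b, g'' ξ ≤ -c) :
    OscDecay g a b (1 / 2) (6 * c ^ (-(1 / 2) : ℝ)) := by
  intro n t ht
  refine ((h.linear_sub_mul n t).norm_integral_osc_le_of_le_deriv2 hab (mul_pos hc ht)
    fun ξ hξ => by nlinarith [hconc ξ hξ]).trans_eq ?_
  rw [Real.sqrt_eq_rpow, div_eq_mul_inv, ← Real.rpow_neg (by positivity),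
    Real.mul_rpow hc.le ht.le, mul_assoc]

theorem HasSecondDerivOn.oscDecay_of_inflection (h : HasSecondDerivOn g g' g'' a b)
    {x₀ K : ℝ} (hx₀ : x₀ ∈ Icc a b) (hK : 0 < K)
    (hleft : ∀ ξ ∈ Icc a x₀, K * (x₀ - ξ) ≤ g'' ξ)
    (hright : ∀ ξ ∈ Icc x₀ b, g'' ξ ≤ -(K * (ξ - x₀))) :
    OscDecay g a b (1 / 3) (14 * K ^ (-(1 / 3) : ℝ)) := by
  intro n t ht
  refine ((h.linear_sub_mul n t).norm_integral_osc_le_of_inflection hx₀ (mul_pos hK ht)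
    (fun ξ hξ => by nlinarith [hleft ξ hξ]) (fun ξ hξ => by nlinarith [hright ξ hξ])).trans_eq ?_
  rw [Real.mul_rpow hK.le ht.le, mul_assoc]

theorem OscDecay.of_const_mul {c : ℝ} (hc : 0 < c)
    (h : OscDecay (fun ξ => c * g ξ) a b ρ C) : OscDecay g a b ρ (C * c ^ ρ) := by
  intro n t ht
  have hscale : ∀ ξ, n * ξ - c * g ξ * (t / c) = n * ξ - g ξ * t := fun ξ => by field_simp
  have := h n (t / c) (div_pos ht hc)
  simp_rw [hscale] at this
  refine this.trans_eq ?_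
  rw [Real.div_rpow ht.le hc.le, Real.rpow_neg hc.le, div_inv_eq_mul]
  ring

theorem OscDecay.of_tendsto {ι : Type*} {l : Filter ι} [l.NeBot] [l.IsCountablyGenerated]
    {G : ι → ℝ → ℝ} (h : ∀ᶠ j in l, OscDecay (G j) a b ρ C) (hG : ∀ᶠ j in l, Continuous (G j))
    (hlim : ∀ ξ ∈ uIcc a b, Tendsto (fun j => G j ξ) l (𝓝 (g ξ))) : OscDecay g a b ρ C := by
  intro n t ht
  have hphase : Tendsto (fun j => ∫ ξ in a..b, osc (fun ξ => n * ξ - G j ξ * t) ξ) l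
      (𝓝 (∫ ξ in a..b, osc (fun ξ => n * ξ - g ξ * t) ξ)) := by
    refine intervalIntegral.tendsto_integral_filter_of_dominated_convergence (fun _ => 1)
      (hG.mono fun j hj => ?_) (.of_forall fun j => .of_forall fun ξ _ => (norm_osc _ ξ).le)
      (by simp) (.of_forall fun ξ hξ => ?_)
    · exact (continuous_osc (by fun_prop)).aestronglyMeasurable
    · have hreal := ((hlim ξ (uIoc_subset_uIcc hξ)).mul_const t).const_sub (n * ξ)
      exact (Complex.continuous_exp.tendsto _).comp
        (((Complex.continuous_ofReal.tendsto _).comp hreal).const_mul Complex.I)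
  exact le_of_tendsto hphase.norm (h.mono fun j hj => hj n t ht)

theorem mul_sub_le_cos_sub_cos {a x y : ℝ} (ha : 0 ≤ a) (hxy : x ≤ y) (hlen : y - x ≤ Real.pi)
    (hlo : 2 * a ≤ x + y) (hhi : x + y ≤ 2 * Real.pi - 2 * a) :
    4 * a / Real.pi ^ 2 * (y - x) ≤ Real.cos x - Real.cos y := by
  have hsum : 2 / Real.pi * a ≤ Real.sin ((x + y) / 2) := by
    have := Real.pi_pos
    obtain h | h := le_total ((x + y) / 2) (Real.pi / 2)
    · refine le_trans ?_ (Real.mul_le_sin (by linarith) h)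
      gcongr
      linarith
    · rw [← Real.sin_pi_sub]
      refine le_trans ?_ (Real.mul_le_sin (by linarith) (by linarith))
      gcongr
      linarith
  have hdiff : 2 / Real.pi * ((y - x) / 2) ≤ Real.sin ((y - x) / 2) :=
    Real.mul_le_sin (by linarith) (by linarith)
  calc _ = 2 * (2 / Real.pi * a) * (2 / Real.pi * ((y - x) / 2)) := by field_simp; ring
    _ ≤ 2 * Real.sin ((x + y) / 2) * Real.sin ((y - x) / 2) := by
        have : 0 ≤ (y - x) / 2 := by linarith
        have hsum₀ : 0 ≤ Real.sin ((x + y) / 2) := le_trans (by positivity) hsum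
        gcongr
    _ = Real.cos x - Real.cos y := by
        rw [Real.cos_sub_cos, ← neg_sub x y, neg_div, Real.sin_neg]; ring

end OscDecay

/-! ### Trigonometric series and the Poisson kernel -/

/-- The series `∑_{k ≥ 1} (1 - cos kξ) b_k / k²`, with `b_k` stored at index `k - 1`. -/
def versineSeries (b : ℕ → ℝ) (ξ : ℝ) : ℝ :=
  ∑' k : ℕ, (1 - Real.cos ((k + 1) * ξ)) * (b k / (k + 1) ^ 2)

/-- The series `∑_{k ≥ 1} sin(kξ) b_k / k`, the derivative of `versineSeries b`. -/
def sineSeries (b : ℕ → ℝ) (ξ : ℝ) : ℝ :=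
  ∑' k : ℕ, Real.sin ((k + 1) * ξ) * (b k / (k + 1))

/-- The series `∑_{k ≥ 1} cos(kξ) b_k`, the second derivative of `versineSeries b`. -/
def cosineSeries (b : ℕ → ℝ) (ξ : ℝ) : ℝ :=
  ∑' k : ℕ, Real.cos ((k + 1) * ξ) * b k

/-- The sum `∑_{k ≥ 1} e^{-kx} cos kξ`, that is, half the Poisson kernel at radius `e^{-x}` without
its constant term. -/
def poissonSum (x ξ : ℝ) : ℝ :=
  (Real.cos ξ - Real.exp (-x)) / (2 * (Real.cosh x - Real.cos ξ))

section TrigonometricSeries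

theorem one_sub_cos_nonneg (x : ℝ) : 0 ≤ 1 - Real.cos x := sub_nonneg.2 (Real.cos_le_one x)

theorem one_sub_cos_le_two (x : ℝ) : 1 - Real.cos x ≤ 2 := by linarith [Real.neg_one_le_cos x]

theorem summable_one_div_succ_rpow {s : ℝ} (hs : 1 < s) :
    Summable fun k : ℕ => 1 / ((k : ℝ) + 1) ^ s := by
  simpa using (summable_nat_add_iff 1).2 (Real.summable_one_div_nat_rpow.2 hs)

variable {b : ℕ → ℝ}

theorem hasDerivAt_sineSeries (hb : Summable fun k => |b k|) (ξ : ℝ) :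
    HasDerivAt (sineSeries b) (cosineSeries b ξ) ξ := by
  refine hasDerivAt_tsum (y₀ := 0) hb
    (g := fun (k : ℕ) ξ => Real.sin (((k : ℝ) + 1) * ξ) * (b k / (k + 1)))
    (g' := fun (k : ℕ) ξ => Real.cos (((k : ℝ) + 1) * ξ) * b k) (fun k y => ?_) (fun k y => ?_)
    (by simp [summable_zero]) ξ
  · have hlin := (hasDerivAt_id' y).const_mul ((k : ℝ) + 1)
    exact (hlin.sin.mul_const _).congr_deriv (by field_simp)
  · rw [norm_mul, Real.norm_eq_abs, Real.norm_eq_abs]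
    exact mul_le_of_le_one_left (abs_nonneg _) (Real.abs_cos_le_one _)

theorem hasDerivAt_versineSeries (hb : Summable fun k => |b k|) (ξ : ℝ) :
    HasDerivAt (versineSeries b) (sineSeries b ξ) ξ := by
  refine hasDerivAt_tsum (y₀ := 0) hb
    (g := fun (k : ℕ) ξ => (1 - Real.cos (((k : ℝ) + 1) * ξ)) * (b k / (k + 1) ^ 2))
    (g' := fun (k : ℕ) ξ => Real.sin (((k : ℝ) + 1) * ξ) * (b k / (k + 1)))
    (fun k y => ?_) (fun k y => ?_) (by simp [summable_zero]) ξ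
  · have hlin := (hasDerivAt_id' y).const_mul ((k : ℝ) + 1)
    exact ((hlin.cos.const_sub 1).mul_const _).congr_deriv (by field_simp)
  · rw [norm_mul, Real.norm_eq_abs, Real.norm_eq_abs, abs_div]
    refine (mul_le_of_le_one_left (by positivity) (Real.abs_sin_le_one _)).trans ?_
    exact div_le_self (abs_nonneg _) ((le_abs_self _).trans' (by simp))

theorem continuous_cosineSeries (hb : Summable fun k => |b k|) : Continuous (cosineSeries b) := by
  refine continuous_tsum (fun k => by fun_prop) hb fun k y => ?_
  rw [norm_mul, Real.norm_eq_abs, Real.norm_eq_abs]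
  exact mul_le_of_le_one_left (abs_nonneg _) (Real.abs_cos_le_one _)

theorem hasSecondDerivOn_versineSeries (hb : Summable fun k => |b k|) (x y : ℝ) :
    HasSecondDerivOn (versineSeries b) (sineSeries b) (cosineSeries b) x y :=
  ⟨fun ξ _ => hasDerivAt_versineSeries hb ξ, fun ξ _ => hasDerivAt_sineSeries hb ξ,
    (continuous_cosineSeries hb).continuousOn⟩

theorem cosh_sub_cos_pos {x : ℝ} (hx : 0 < x) (ξ : ℝ) : 0 < Real.cosh x - Real.cos ξ :=
  sub_pos.2 ((Real.cos_le_one ξ).trans_lt (Real.one_lt_cosh.2 hx.ne'))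

theorem half_add_poissonSum {x : ℝ} (hx : 0 < x) (ξ : ℝ) :
    1 / 2 + poissonSum x ξ = Real.sinh x / (2 * (Real.cosh x - Real.cos ξ)) := by
  have h := (cosh_sub_cos_pos hx ξ).ne'
  rw [poissonSum, ← Real.cosh_sub_sinh x]
  field_simp
  ring

theorem half_add_poissonSum_pos {x : ℝ} (hx : 0 < x) (ξ : ℝ) : 0 < 1 / 2 + poissonSum x ξ := by
  rw [half_add_poissonSum hx]
  exact div_pos (Real.sinh_pos_iff.2 hx) (mul_pos two_pos (cosh_sub_cos_pos hx ξ))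

theorem poissonSum_sub_poissonSum {x : ℝ} (hx : 0 < x) (ξ η : ℝ) :
    poissonSum x ξ - poissonSum x η = Real.sinh x * (Real.cos ξ - Real.cos η) /
      (2 * ((Real.cosh x - Real.cos ξ) * (Real.cosh x - Real.cos η))) := by
  have hξ := (cosh_sub_cos_pos hx ξ).ne'
  have hη := (cosh_sub_cos_pos hx η).ne'
  rw [← add_sub_add_left_eq_sub _ _ (1 / 2), half_add_poissonSum hx, half_add_poissonSum hx]
  field_simp
  ring

theorem poissonSum_mono {x : ℝ} (hx : 0 < x) {ξ η : ℝ} (h : Real.cos η ≤ Real.cos ξ) :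
    poissonSum x η ≤ poissonSum x ξ := by
  rw [← sub_nonneg, poissonSum_sub_poissonSum hx]
  have := cosh_sub_cos_pos hx ξ
  have := cosh_sub_cos_pos hx η
  have := Real.sinh_pos_iff.2 hx
  have := sub_nonneg.2 h
  positivity

theorem poissonSum_nonneg {x ξ : ℝ} (hx : 0 < x) (h : Real.exp (-x) ≤ Real.cos ξ) :
    0 ≤ poissonSum x ξ :=
  div_nonneg (sub_nonneg.2 h) (mul_nonneg two_pos.le (cosh_sub_cos_pos hx ξ).le)

theorem poissonSum_pos {x ξ : ℝ} (hx : 0 < x) (h : Real.exp (-x) < Real.cos ξ) :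
    0 < poissonSum x ξ :=
  div_pos (sub_pos.2 h) (mul_pos two_pos (cosh_sub_cos_pos hx ξ))

theorem poissonSum_pi_div_two_nonpos {x : ℝ} (hx : 0 < x) : poissonSum x (Real.pi / 2) ≤ 0 := by
  refine div_nonpos_of_nonpos_of_nonneg ?_ (mul_nonneg two_pos.le (cosh_sub_cos_pos hx _).le)
  simp [Real.exp_nonneg]

theorem measurable_poissonSum (ξ : ℝ) : Measurable fun x => poissonSum x ξ := by
  have := Real.continuous_cosh.measurable
  unfold poissonSum
  fun_prop

theorem re_geometric_exp {x : ℝ} (hx : 0 < x) (ξ : ℝ) :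
    (Complex.exp (-x + ξ * Complex.I) * (1 - Complex.exp (-x + ξ * Complex.I))⁻¹).re
      = poissonSum x ξ := by
  set z := Complex.exp (-x + ξ * Complex.I)
  have hre : z.re = Real.exp (-x) * Real.cos ξ := by simp [z, Complex.exp_re]
  have him : z.im = Real.exp (-x) * Real.sin ξ := by simp [z, Complex.exp_im]
  have hcosh := cosh_sub_cos_pos hx ξ
  rw [poissonSum, Complex.mul_re, Complex.inv_re, Complex.inv_im, Complex.normSq_apply]
  simp only [Complex.sub_re, Complex.sub_im, Complex.one_re, Complex.one_im, hre, him]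
  rw [Real.cosh_eq] at *
  have hmul : Real.exp x * Real.exp (-x) = 1 := by rw [← Real.exp_add]; simp
  have htrig := Real.sin_sq_add_cos_sq ξ
  have hexp := Real.exp_pos (-x)
  set e := Real.exp (-x)
  set E := Real.exp x
  set c := Real.cos ξ
  set s := Real.sin ξ
  have hden : (1 - e * c) * (1 - e * c) + (0 - e * s) * (0 - e * s)
      = e * (2 * ((E + e) / 2 - c)) := by
    linear_combination e ^ 2 * htrig - hmul
  have hne : 2 * ((E + e) / 2 - c) ≠ 0 := (mul_pos two_pos hcosh).ne'
  rw [hden, mul_div_assoc', mul_div_assoc', ← sub_div,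
    div_eq_div_iff (mul_ne_zero hexp.ne' hne) hne]
  linear_combination (-2 * e ^ 2 * ((E + e) / 2 - c)) * htrig

theorem hasSum_poissonSum {x : ℝ} (hx : 0 < x) (ξ : ℝ) :
    HasSum (fun k : ℕ => Real.cos ((k + 1) * ξ) * Real.exp (-((k + 1) * x))) (poissonSum x ξ) := by
  have hnorm : ‖Complex.exp (-x + ξ * Complex.I)‖ < 1 := by simpa [Complex.norm_exp] using hx
  have := Complex.hasSum_re ((hasSum_geometric_of_norm_lt_one hnorm).mul_left
    (Complex.exp (-x + ξ * Complex.I)))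
  rw [re_geometric_exp hx] at this
  refine this.congr_fun fun k => ?_
  rw [← pow_succ', ← Complex.exp_nat_mul, Complex.exp_re]
  simp [mul_comm]

theorem abs_poissonSum_le {x : ℝ} (hx : 0 < x) (ξ : ℝ) :
    |poissonSum x ξ| ≤ Real.exp (-x) * (1 - Real.exp (-x))⁻¹ := by
  have hgeom := (hasSum_geometric_of_lt_one (Real.exp_nonneg (-x))
    (Real.exp_lt_one_iff.2 (neg_neg_of_pos hx))).mul_left (Real.exp (-x))
  rw [← (hasSum_poissonSum hx ξ).tsum_eq, ← Real.norm_eq_abs]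
  refine tsum_of_norm_bounded hgeom fun k => ?_
  rw [norm_mul, Real.norm_eq_abs, Real.norm_of_nonneg (Real.exp_nonneg _), ← pow_succ',
    ← Real.exp_nat_mul]
  refine (mul_le_of_le_one_left (Real.exp_nonneg _) (Real.abs_cos_le_one _)).trans_eq ?_
  push_cast
  ring_nf

end TrigonometricSeries

/-! ### Laplace transforms of positive weights -/

/-- A positive weight on `(0, ∞)`, integrable against `e^{-x}` away from the origin. -/
structure IsLaplaceWeight (w : ℝ → ℝ) : Prop where
  pos : ∀ x, 0 < x → 0 < w x
  integrableOn : ∀ δ, 0 < δ → IntegrableOn (fun x => w x * Real.exp (-x)) (Ioi δ)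

/-- The Laplace transform at `k + 1` of the weight `w` truncated to `(δ, ∞)`. -/
def laplaceCoeff (w : ℝ → ℝ) (δ : ℝ) (k : ℕ) : ℝ :=
  ∫ x in Ioi δ, w x * Real.exp (-((k + 1) * x))

/-- The constant by which cosine series of Laplace coefficients separate points, in units of the
difference of cosines; only the part `x > 1` of the weight is used, which makes it independent of
the truncation. -/
def poissonGap (w : ℝ → ℝ) : ℝ :=
  ∫ x in Ioi 1, w x * (Real.sinh x / (2 * (Real.cosh x + 1) ^ 2))

theorem setIntegral_Ioi_pos {a : ℝ} {f : ℝ → ℝ} (hf : ∀ x, a < x → 0 < f x)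
    (hint : IntegrableOn f (Ioi a)) : 0 < ∫ x in Ioi a, f x := by
  rw [setIntegral_pos_iff_support_of_nonneg_ae
    ((ae_restrict_mem measurableSet_Ioi).mono fun x hx => (hf x hx).le) hint,
    inter_eq_right.2 fun x (hx : x ∈ Ioi a) => Function.mem_support.2 (hf x hx).ne',
    Real.volume_Ioi]
  exact ENNReal.zero_lt_top

namespace IsLaplaceWeight

variable {w : ℝ → ℝ} {δ : ℝ}

theorem integrableOn_mul (hw : IsLaplaceWeight w) (hδ : 0 < δ) {f : ℝ → ℝ} (hf : Measurable f)
    {C : ℝ} (hC : ∀ x, δ < x → |f x| ≤ C * Real.exp (-x)) :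
    IntegrableOn (fun x => w x * f x) (Ioi δ) := by
  have hbdd : ∀ᵐ x ∂volume.restrict (Ioi δ), ‖Real.exp x * f x‖ ≤ C :=
    (ae_restrict_mem measurableSet_Ioi).mono fun x hx => by
      rw [norm_mul, Real.norm_of_nonneg (Real.exp_nonneg _), Real.norm_eq_abs]
      calc _ ≤ Real.exp x * (C * Real.exp (-x)) := by gcongr; exact hC x hx
        _ = C := by rw [mul_left_comm, ← Real.exp_add, add_neg_cancel, Real.exp_zero, mul_one]
  have hmeas : Measurable fun x => Real.exp x * f x := by fun_prop
  have hint : IntegrableOn (fun x => w x * Real.exp (-x) * (Real.exp x * f x)) (Ioi δ) :=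
    (hw.integrableOn δ hδ).mul_bdd hmeas.aestronglyMeasurable hbdd
  refine hint.congr_fun (fun x _ => ?_) measurableSet_Ioi
  simp only
  rw [mul_assoc, ← mul_assoc (Real.exp (-x)), ← Real.exp_add, neg_add_cancel, Real.exp_zero,
    one_mul]

theorem integrableOn_exp (hw : IsLaplaceWeight w) (hδ : 0 < δ) (k : ℕ) :
    IntegrableOn (fun x => w x * Real.exp (-((k + 1) * x))) (Ioi δ) := by
  refine hw.integrableOn_mul hδ (by fun_prop) (C := 1) fun x hx => ?_
  rw [abs_of_nonneg (Real.exp_nonneg _), one_mul, Real.exp_le_exp]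
  nlinarith [mul_nonneg (Nat.cast_nonneg (α := ℝ) k) (hδ.trans hx).le]

theorem laplaceCoeff_nonneg (hw : IsLaplaceWeight w) (hδ : 0 < δ) (k : ℕ) :
    0 ≤ laplaceCoeff w δ k :=
  setIntegral_nonneg measurableSet_Ioi fun x hx =>
    mul_nonneg (hw.pos x (hδ.trans hx)).le (Real.exp_nonneg _)

theorem summable_laplaceCoeff (hw : IsLaplaceWeight w) (hδ : 0 < δ) :
    Summable (laplaceCoeff w δ) := by
  have hgeom : Summable fun k : ℕ => Real.exp (-δ) ^ k * laplaceCoeff w δ 0 :=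
    (summable_geometric_of_lt_one (Real.exp_nonneg _)
      (Real.exp_lt_one_iff.2 (neg_neg_of_pos hδ))).mul_right _
  refine .of_nonneg_of_le (hw.laplaceCoeff_nonneg hδ) (fun k => ?_) hgeom
  rw [laplaceCoeff, laplaceCoeff, ← integral_const_mul]
  refine setIntegral_mono_on (hw.integrableOn_exp hδ k)
    ((hw.integrableOn_exp hδ 0).const_mul _) measurableSet_Ioi fun x (hx : δ < x) => ?_
  rw [mul_left_comm, ← Real.exp_nat_mul, ← Real.exp_add]
  have := (hw.pos x (hδ.trans hx)).le
  gcongr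
  push_cast
  nlinarith [mul_le_mul_of_nonneg_left hx.le (Nat.cast_nonneg (α := ℝ) k)]

theorem summable_abs_laplaceCoeff (hw : IsLaplaceWeight w) (hδ : 0 < δ) :
    Summable fun k => |laplaceCoeff w δ k| :=
  (hw.summable_laplaceCoeff hδ).abs

theorem integrableOn_mul_poissonSum (hw : IsLaplaceWeight w) (hδ : 0 < δ) (ξ : ℝ) :
    IntegrableOn (fun x => w x * poissonSum x ξ) (Ioi δ) := by
  refine hw.integrableOn_mul hδ (measurable_poissonSum ξ) (C := (1 - Real.exp (-δ))⁻¹)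
    fun x hx => ?_
  have hδ1 : Real.exp (-δ) < 1 := Real.exp_lt_one_iff.2 (neg_neg_of_pos hδ)
  refine (abs_poissonSum_le (hδ.trans hx) ξ).trans ?_
  rw [mul_comm]
  gcongr

theorem cosineSeries_laplaceCoeff (hw : IsLaplaceWeight w) (hδ : 0 < δ) (ξ : ℝ) :
    cosineSeries (laplaceCoeff w δ) ξ = ∫ x in Ioi δ, w x * poissonSum x ξ := by
  have hint (k : ℕ) := (hw.integrableOn_exp hδ k).const_mul (Real.cos ((k + 1) * ξ))
  have hsum : Summable fun k : ℕ => ∫ x in Ioi δ,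
      ‖Real.cos ((k + 1) * ξ) * (w x * Real.exp (-((k + 1) * x)))‖ := by
    refine .of_nonneg_of_le (fun k => by positivity) (fun k => ?_) (hw.summable_laplaceCoeff hδ)
    refine setIntegral_mono_on (hint k).norm (hw.integrableOn_exp hδ k) measurableSet_Ioi ?_
    intro x hx
    have hpos := mul_nonneg (hw.pos x (hδ.trans hx)).le (Real.exp_nonneg (-((k + 1) * x)))
    rw [norm_mul, Real.norm_of_nonneg hpos]
    exact mul_le_of_le_one_left hpos (Real.abs_cos_le_one _)
  simp_rw [cosineSeries, laplaceCoeff, ← integral_const_mul]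
  rw [(hasSum_integral_of_summable_integral_norm hint hsum).tsum_eq]
  refine setIntegral_congr_fun measurableSet_Ioi fun x hx => ?_
  simp_rw [← (hasSum_poissonSum (hδ.trans hx) ξ).tsum_eq, ← tsum_mul_left, mul_left_comm]

theorem integrableOn_poissonGap (hw : IsLaplaceWeight w) :
    IntegrableOn (fun x => w x * (Real.sinh x / (2 * (Real.cosh x + 1) ^ 2))) (Ioi 1) := by
  have := Real.continuous_sinh.measurable
  have := Real.continuous_cosh.measurable
  refine hw.integrableOn_mul one_pos (by fun_prop) (C := 1) fun x hx => ?_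
  have := Real.sinh_pos_iff.2 (one_pos.trans hx)
  have := Real.cosh_pos x
  have hexp : Real.exp x ≤ 2 * (Real.cosh x + 1) := by
    rw [Real.cosh_eq]
    linarith [Real.exp_pos (-x)]
  rw [abs_of_nonneg (by positivity), one_mul, Real.exp_neg, ← one_div,
    div_le_div_iff₀ (by positivity) (Real.exp_pos x)]
  calc _ ≤ (Real.cosh x + 1) * (2 * (Real.cosh x + 1)) := by
        gcongr
        linarith [Real.sinh_lt_cosh x]
    _ = 1 * (2 * (Real.cosh x + 1) ^ 2) := by ring

theorem poissonGap_pos (hw : IsLaplaceWeight w) : 0 < poissonGap w := by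
  refine setIntegral_Ioi_pos (fun x hx => ?_) hw.integrableOn_poissonGap
  have := hw.pos x (one_pos.trans hx)
  have := Real.sinh_pos_iff.2 (one_pos.trans hx)
  have := Real.cosh_pos x
  positivity

end IsLaplaceWeight

theorem cos_arccos_exp_neg {x : ℝ} (hx : 0 ≤ x) :
    Real.cos (Real.arccos (Real.exp (-x))) = Real.exp (-x) :=
  Real.cos_arccos (neg_one_lt_zero.le.trans (Real.exp_nonneg _))
    (Real.exp_le_one_iff.2 (neg_nonpos.2 hx))

theorem exists_half_setIntegral_Ioc_le {w : ℝ → ℝ} (hw : IntegrableOn w (Ioc 0 1)) {J : ℝ}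
    (hJ : 0 < J) :
    ∃ τ ∈ Ioc (0 : ℝ) 1, (∫ x in Ioc 0 τ, w x) / 2 ≤ J := by
  have hcont : ContinuousWithinAt (fun τ => ∫ x in (0 : ℝ)..τ, w x) (Icc 0 1) 0 :=
    (intervalIntegral.continuousOn_primitive_interval
      (by rwa [uIcc_of_le zero_le_one, integrableOn_Icc_iff_integrableOn_Ioc]) 0
      left_mem_uIcc).mono (uIcc_of_le (zero_le_one' ℝ)).ge
  have hlim : ∀ᶠ τ in 𝓝[Ioc (0 : ℝ) 1] 0, (∫ x in (0 : ℝ)..τ, w x) < J :=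
    (hcont.mono Ioc_subset_Icc_self).eventually_lt_const (by simpa using hJ)
  have : (𝓝[Ioc (0 : ℝ) 1] 0).NeBot := by
    rw [nhdsWithin_Ioc_eq_nhdsGT one_pos]
    infer_instance
  obtain ⟨τ, hτJ, hτ⟩ := (hlim.and self_mem_nhdsWithin).exists
  rw [intervalIntegral.integral_of_le hτ.1.le] at hτJ
  exact ⟨τ, hτ, by linarith⟩

namespace IsLaplaceWeight

variable {w : ℝ → ℝ} {δ ξ η : ℝ}

theorem poissonGap_mul_le_cosineSeries_sub (hw : IsLaplaceWeight w) (hδ : 0 < δ) (hδ1 : δ ≤ 1)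
    (h : Real.cos η ≤ Real.cos ξ) :
    poissonGap w * (Real.cos ξ - Real.cos η) ≤
      cosineSeries (laplaceCoeff w δ) ξ - cosineSeries (laplaceCoeff w δ) η := by
  have hint := (hw.integrableOn_mul_poissonSum hδ ξ).sub (hw.integrableOn_mul_poissonSum hδ η)
  rw [hw.cosineSeries_laplaceCoeff hδ, hw.cosineSeries_laplaceCoeff hδ, ← integral_sub
    (hw.integrableOn_mul_poissonSum hδ ξ) (hw.integrableOn_mul_poissonSum hδ η), poissonGap,
    ← integral_mul_const]
  calc _ ≤ ∫ x in Ioi 1, (w x * poissonSum x ξ - w x * poissonSum x η) := by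
        refine setIntegral_mono_on (hw.integrableOn_poissonGap.mul_const _)
          (hint.mono_set (Ioi_subset_Ioi hδ1)) measurableSet_Ioi fun x hx => ?_
        have hx0 : 0 < x := one_pos.trans hx
        have := (hw.pos x hx0).le
        have := (Real.sinh_pos_iff.2 hx0).le
        have := cosh_sub_cos_pos hx0 ξ
        have := cosh_sub_cos_pos hx0 η
        have := sub_nonneg.2 h
        rw [← mul_sub, poissonSum_sub_poissonSum hx0, mul_assoc, div_mul_eq_mul_div, sq]
        gcongr <;> linarith [Real.neg_one_le_cos ξ, Real.neg_one_le_cos η]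
    _ ≤ _ := by
        refine setIntegral_mono_set hint ?_ (Ioi_subset_Ioi hδ1).eventuallyLE
        filter_upwards [ae_restrict_mem measurableSet_Ioi] with x hx
        have hx0 : 0 < x := hδ.trans hx
        simpa [← mul_sub] using
          mul_nonneg (hw.pos x hx0).le (sub_nonneg.2 (poissonSum_mono hx0 h))

theorem cosineSeries_pi_div_two_nonpos (hw : IsLaplaceWeight w) (hδ : 0 < δ) :
    cosineSeries (laplaceCoeff w δ) (Real.pi / 2) ≤ 0 := by
  rw [hw.cosineSeries_laplaceCoeff hδ]
  exact setIntegral_nonpos measurableSet_Ioi fun x hx => mul_nonpos_of_nonneg_of_nonpos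
    (hw.pos x (hδ.trans hx)).le (poissonSum_pi_div_two_nonpos (hδ.trans hx))

/- At the angle `arccos (e^{-τ})` the Poisson sum is nonnegative for `x ≥ τ` and at least `-1/2` for
`x ≤ τ`. -/
theorem mul_poissonSum_arccos_add_indicator_nonneg (hw : IsLaplaceWeight w) {τ x : ℝ} (hτ : 0 ≤ τ)
    (hx : 0 < x) :
    0 ≤ w x * poissonSum x (Real.arccos (Real.exp (-τ))) + indicator (Ioc 0 τ) w x / 2 := by
  have hwx := (hw.pos x hx).le
  rcases le_or_gt x τ with hxτ | hxτ
  · rw [indicator_of_mem (show x ∈ Ioc 0 τ from ⟨hx, hxτ⟩), div_eq_mul_one_div, ← mul_add,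
      add_comm]
    exact mul_nonneg hwx (half_add_poissonSum_pos hx _).le
  · rw [indicator_of_notMem fun h => hxτ.not_ge h.2, zero_div, add_zero]
    refine mul_nonneg hwx (poissonSum_nonneg hx ?_)
    rw [cos_arccos_exp_neg hτ]
    exact Real.exp_le_exp.2 (neg_le_neg hxτ.le)

theorem sub_le_cosineSeries_arccos (hw : IsLaplaceWeight w) (hw0 : IntegrableOn w (Ioc 0 1))
    (hδ : δ ∈ Ioc (0 : ℝ) 1) {τ : ℝ} (hτ : τ ∈ Ioc (0 : ℝ) 1) :
    (∫ x in Ioi 1, w x * poissonSum x (Real.arccos (Real.exp (-1)))) -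
      (∫ x in Ioc 0 τ, w x) / 2 ≤
        cosineSeries (laplaceCoeff w δ) (Real.arccos (Real.exp (-τ))) := by
  set a := Real.arccos (Real.exp (-τ))
  have hP := hw.integrableOn_mul_poissonSum hδ.1 a
  have hI : IntegrableOn (indicator (Ioc 0 τ) w) (Ioi 0) :=
    ((hw0.mono_set (Ioc_subset_Ioc_right hτ.2)).integrable_indicator
      measurableSet_Ioc).integrableOn
  have hI' := (hI.mono_set (Ioi_subset_Ioi hδ.1.le)).div_const 2
  have hlower : ∫ x in Ioi 1, w x * poissonSum x (Real.arccos (Real.exp (-1))) ≤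
      ∫ x in Ioi δ, (w x * poissonSum x a + indicator (Ioc 0 τ) w x / 2) := by
    refine (setIntegral_mono_on (hw.integrableOn_mul_poissonSum one_pos _)
      ((hP.add hI').mono_set (Ioi_subset_Ioi hδ.2)) measurableSet_Ioi fun x hx => ?_).trans
      (setIntegral_mono_set (hP.add hI') ((ae_restrict_mem measurableSet_Ioi).mono fun x hx =>
        hw.mul_poissonSum_arccos_add_indicator_nonneg hτ.1.le (hδ.1.trans hx))
        (Ioi_subset_Ioi hδ.2).eventuallyLE)
    have hx0 : 0 < x := one_pos.trans hx
    rw [Pi.add_apply, indicator_of_notMem fun h => (hτ.2.trans_lt hx).not_ge h.2, zero_div,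
      add_zero]
    refine mul_le_mul_of_nonneg_left (poissonSum_mono hx0 ?_) (hw.pos x hx0).le
    rw [cos_arccos_exp_neg hτ.1.le, cos_arccos_exp_neg zero_le_one]
    exact Real.exp_le_exp.2 (neg_le_neg hτ.2)
  have hupper : ∫ x in Ioi δ, indicator (Ioc 0 τ) w x / 2 ≤ (∫ x in Ioc 0 τ, w x) / 2 := by
    rw [integral_div, setIntegral_indicator measurableSet_Ioc]
    refine div_le_div_of_nonneg_right ?_ two_pos.le
    refine setIntegral_mono_set (hw0.mono_set (Ioc_subset_Ioc_right hτ.2)) ?_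
      inter_subset_right.eventuallyLE
    exact (ae_restrict_mem measurableSet_Ioc).mono fun x hx => (hw.pos x hx.1).le
  rw [integral_add hP hI'] at hlower
  rw [hw.cosineSeries_laplaceCoeff hδ.1]
  linarith

theorem exists_cosineSeries_nonneg (hw : IsLaplaceWeight w) (hw0 : IntegrableOn w (Ioc 0 1)) :
    ∃ a ∈ Ioc 0 (Real.pi / 2), ∀ δ ∈ Ioc (0 : ℝ) 1, 0 ≤ cosineSeries (laplaceCoeff w δ) a := by
  have hJ : 0 < ∫ x in Ioi 1, w x * poissonSum x (Real.arccos (Real.exp (-1))) := by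
    refine setIntegral_Ioi_pos (fun x hx => mul_pos (hw.pos x (one_pos.trans hx)) ?_)
      (hw.integrableOn_mul_poissonSum one_pos _)
    refine poissonSum_pos (one_pos.trans hx) ?_
    rw [cos_arccos_exp_neg zero_le_one]
    exact Real.exp_lt_exp.2 (neg_lt_neg hx)
  obtain ⟨τ, hτ, hτJ⟩ := exists_half_setIntegral_Ioc_le hw0 hJ
  exact ⟨Real.arccos (Real.exp (-τ)),
    ⟨Real.arccos_pos.2 (Real.exp_lt_one_iff.2 (neg_neg_of_pos hτ.1)),
      Real.arccos_le_pi_div_two.2 (Real.exp_nonneg _)⟩,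
    fun δ hδ => (sub_nonneg.2 hτJ).trans (hw.sub_le_cosineSeries_arccos hw0 hδ hτ)⟩

theorem exists_oscDecay_versineSeries (hw : IsLaplaceWeight w) (hw0 : IntegrableOn w (Ioc 0 1)) :
    ∃ C, ∀ δ ∈ Ioc (0 : ℝ) 1,
      OscDecay (versineSeries (laplaceCoeff w δ)) 0 Real.pi (1 / 3) C := by
  obtain ⟨a, ⟨ha0, ha⟩, hnonneg⟩ := hw.exists_cosineSeries_nonneg hw0
  have := Real.pi_pos
  set K := poissonGap w * (4 * (a / 2) / Real.pi ^ 2) with hK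
  have hgap := hw.poissonGap_pos
  refine ⟨14 * K ^ (-(1 / 3) : ℝ), fun δ hδ => ?_⟩
  have hsum := hw.summable_abs_laplaceCoeff hδ.1
  obtain ⟨x₀, hx₀, hzero⟩ : 0 ∈ cosineSeries (laplaceCoeff w δ) '' Icc a (Real.pi / 2) :=
    intermediate_value_Icc' ha (continuous_cosineSeries hsum).continuousOn
      ⟨hw.cosineSeries_pi_div_two_nonpos hδ.1, hnonneg δ hδ⟩
  have hsep {x y : ℝ} (hxy : x ≤ y) (hx : 0 ≤ x) (hy : y ≤ Real.pi) (hlo : a ≤ x + y)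
      (hhi : x + y ≤ 2 * Real.pi - a) :
      K * (y - x) ≤
        cosineSeries (laplaceCoeff w δ) x - cosineSeries (laplaceCoeff w δ) y := by
    have hcos := mul_sub_le_cos_sub_cos (half_pos ha0).le hxy (by linarith) (by linarith)
      (by linarith)
    refine le_trans ?_ (hw.poissonGap_mul_le_cosineSeries_sub hδ.1 hδ.2
      (Real.cos_le_cos_of_nonneg_of_le_pi hx hy hxy))
    rw [hK, mul_assoc]
    gcongr
  refine (hasSecondDerivOn_versineSeries hsum 0 Real.pi).oscDecay_of_inflection (x₀ := x₀)
    ⟨by linarith [hx₀.1], by linarith [hx₀.2]⟩ (by positivity) (fun ξ hξ => ?_) (fun ξ hξ => ?_)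
  · have := hsep hξ.2 hξ.1 (by linarith [hx₀.2]) (by linarith [hx₀.1, hξ.1])
      (by linarith [hx₀.2, hξ.2])
    linarith
  · have := hsep hξ.1 (by linarith [hx₀.1]) hξ.2 (by linarith [hx₀.1, hξ.1])
      (by linarith [hx₀.2, hξ.2])
    linarith

end IsLaplaceWeight

theorem OscDecay.congr {g g₁ : ℝ → ℝ} {a b ρ C : ℝ} (h : OscDecay g a b ρ C)
    (hg : ∀ ξ ∈ uIcc a b, g ξ = g₁ ξ) : OscDecay g₁ a b ρ C := by
  intro n t ht
  refine (congrArg norm (intervalIntegral.integral_congr fun ξ hξ => ?_)).trans_le (h n t ht)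
  simp only [osc, hg ξ hξ]

theorem rpow_one_sub_div_sq (α : ℝ) (k : ℕ) :
    ((k : ℝ) + 1) ^ (1 - α) / (k + 1) ^ 2 = 1 / (k + 1) ^ (1 + α) := by
  have hk : (0 : ℝ) < k + 1 := k.cast_add_one_pos
  rw [← Real.rpow_two, ← Real.rpow_sub hk, one_div, ← Real.rpow_neg hk.le]
  ring_nf

theorem versineSeries_eq_two_mul_sigma1 (α ξ : ℝ) :
    versineSeries (fun k => (k + 1) ^ (1 - α)) ξ = 2 * sigma1 α ξ := by
  rw [versineSeries, sigma1, ← tsum_mul_left]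
  refine tsum_congr fun k => ?_
  rw [Real.sin_sq_eq_half_sub, mul_div_cancel₀ _ two_ne_zero, rpow_one_sub_div_sq]
  ring

theorem versineSeries_const_mul (c : ℝ) (b : ℕ → ℝ) (ξ : ℝ) :
    versineSeries (fun k => c * b k) ξ = c * versineSeries b ξ := by
  rw [versineSeries, versineSeries, ← tsum_mul_left]
  exact tsum_congr fun k => by ring

theorem norm_versineSeries_term_le (b : ℕ → ℝ) (ξ : ℝ) (k : ℕ) :
    ‖(1 - Real.cos ((k + 1) * ξ)) * (b k / (k + 1) ^ 2)‖ ≤ 2 * (|b k| / (k + 1) ^ 2) := by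
  rw [norm_mul, Real.norm_of_nonneg (one_sub_cos_nonneg _), norm_div, Real.norm_eq_abs,
    Real.norm_of_nonneg (by positivity)]
  gcongr
  exact one_sub_cos_le_two _

theorem continuous_versineSeries {b : ℕ → ℝ}
    (hb : Summable fun k : ℕ => |b k| / ((k : ℝ) + 1) ^ 2) : Continuous (versineSeries b) :=
  continuous_tsum (fun k => by fun_prop) (hb.mul_left 2) fun k ξ => norm_versineSeries_term_le b ξ k

theorem versineSeries_sub {b c : ℕ → ℝ} (hb : Summable fun k : ℕ => |b k| / ((k : ℝ) + 1) ^ 2)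
    (hc : Summable fun k : ℕ => |c k| / ((k : ℝ) + 1) ^ 2) (ξ : ℝ) :
    versineSeries (fun k => b k - c k) ξ = versineSeries b ξ - versineSeries c ξ := by
  rw [versineSeries, versineSeries, versineSeries, ← Summable.tsum_sub
    (.of_norm_bounded (hb.mul_left 2) (norm_versineSeries_term_le b ξ))
    (.of_norm_bounded (hc.mul_left 2) (norm_versineSeries_term_le c ξ))]
  exact tsum_congr fun k => by ring

theorem versineSeries_one {ξ : ℝ} (hξ : ξ ∈ Icc 0 Real.pi) :
    versineSeries (fun _ => 1) ξ = Real.pi * ξ / 2 - ξ ^ 2 / 4 := by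
  have := Real.pi_pos
  have hx : ξ / (2 * Real.pi) ∈ Icc (0 : ℝ) 1 :=
    ⟨div_nonneg hξ.1 (by positivity), (div_le_one (by positivity)).2 (by linarith [hξ.2])⟩
  have heval (x : ℝ) : ((Polynomial.bernoulli (2 * 1)).map (algebraMap ℚ ℝ)).eval x =
      x ^ 2 - x + 6⁻¹ := bernoulliFun_two x
  have hsum := (hasSum_one_div_nat_pow_mul_cos one_ne_zero (left_mem_Icc.2 zero_le_one)).sub
    (hasSum_one_div_nat_pow_mul_cos one_ne_zero hx)
  rw [heval, heval, ← hasSum_nat_add_iff' 1] at hsum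
  rw [versineSeries]
  convert hsum.tsum_eq using 1
  · refine tsum_congr fun k => ?_
    rw [show 2 * Real.pi * ((k + 1 : ℕ) : ℝ) * (ξ / (2 * Real.pi)) = (k + 1) * ξ by
      push_cast; field_simp]
    push_cast
    rw [mul_zero, Real.cos_zero]
    ring
  · rw [Finset.sum_range_one]
    simp only [Nat.cast_zero, mul_zero, zero_mul, sub_self, Nat.factorial, ne_eq,
      OfNat.ofNat_ne_zero, not_false_eq_true, zero_pow, one_div]
    push_cast
    field_simp
    ring

/-! ### Removing the truncation -/

/-- The coefficients `∫_δ^∞ x^{α-2} h((k+1)x) dx`, which regularize the power `(k+1)^{1-α}`: by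
scaling they tend to a multiple of it as `δ → 0`. -/
def truncatedCoeff (α : ℝ) (h : ℝ → ℝ) (δ : ℝ) (k : ℕ) : ℝ :=
  ∫ x in Set.Ioi δ, x ^ (α - 2) * h ((k + 1) * x)

section Truncation

variable {α : ℝ} {h : ℝ → ℝ}

theorem integrableOn_rpow_mul_comp_mul_left
    (hint : IntegrableOn (fun x => x ^ (α - 2) * h x) (Ioi 0)) {c : ℝ} (hc : 0 < c) :
    IntegrableOn (fun x => x ^ (α - 2) * h (c * x)) (Ioi 0) := by
  have hscale := (integrableOn_Ioi_comp_mul_left_iff _ 0 hc).2 (by rwa [mul_zero])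
  refine IntegrableOn.congr_fun (hscale.const_mul (c ^ (2 - α))) (fun x hx => ?_) measurableSet_Ioi
  rw [Real.mul_rpow hc.le (le_of_lt hx), ← mul_assoc, ← mul_assoc, ← Real.rpow_add hc]
  simp

theorem integral_rpow_mul_comp_mul_left {c : ℝ} (hc : 0 < c) :
    ∫ x in Ioi 0, x ^ (α - 2) * h (c * x) =
      (∫ x in Ioi 0, x ^ (α - 2) * h x) * c ^ (1 - α) := by
  have hscale := integral_comp_mul_left_Ioi (fun x => x ^ (α - 2) * h x) 0 hc
  rw [mul_zero, smul_eq_mul] at hscale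
  have hpow : ∫ x in Ioi 0, (c * x) ^ (α - 2) * h (c * x) =
      c ^ (α - 2) * ∫ x in Ioi 0, x ^ (α - 2) * h (c * x) := by
    rw [← integral_const_mul]
    refine setIntegral_congr_fun measurableSet_Ioi fun x hx => ?_
    rw [Real.mul_rpow hc.le (le_of_lt hx), mul_assoc]
  rw [hpow] at hscale
  rw [show 1 - α = -1 - (α - 2) by ring, Real.rpow_sub hc, Real.rpow_neg_one]
  field_simp at hscale ⊢
  linarith

theorem tendsto_setIntegral_Ioi {f : ℝ → ℝ} (hf : IntegrableOn f (Ioi 0)) :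
    Tendsto (fun δ => ∫ x in Ioi δ, f x) (𝓝[>] 0) (𝓝 (∫ x in Ioi 0, f x)) := by
  have hcover := aecover_Ioi_of_Ioi (μ := volume) (tendsto_id.mono_left
    (nhdsWithin_le_nhds : 𝓝[>] (0 : ℝ) ≤ 𝓝 0))
  refine (hcover.integral_tendsto_of_countably_generated hf).congr' ?_
  filter_upwards [self_mem_nhdsWithin] with δ hδ
  rw [Measure.restrict_restrict measurableSet_Ioi, inter_eq_left.2 (Ioi_subset_Ioi (le_of_lt hδ))]
  rfl

theorem truncatedCoeff_nonneg (hh : ∀ x, 0 < x → 0 ≤ h x) {δ : ℝ} (hδ : 0 ≤ δ) (k : ℕ) :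
    0 ≤ truncatedCoeff α h δ k :=
  setIntegral_nonneg measurableSet_Ioi fun x hx =>
    have hx0 : 0 < x := hδ.trans_lt hx
    mul_nonneg (Real.rpow_nonneg hx0.le _) (hh _ (mul_pos k.cast_add_one_pos hx0))

theorem truncatedCoeff_le (hh : ∀ x, 0 < x → 0 ≤ h x)
    (hint : IntegrableOn (fun x => x ^ (α - 2) * h x) (Ioi 0)) {δ : ℝ} (hδ : 0 ≤ δ) (k : ℕ) :
    truncatedCoeff α h δ k ≤ (∫ x in Ioi 0, x ^ (α - 2) * h x) * (k + 1) ^ (1 - α) := by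
  rw [← integral_rpow_mul_comp_mul_left k.cast_add_one_pos]
  refine setIntegral_mono_set (integrableOn_rpow_mul_comp_mul_left hint k.cast_add_one_pos) ?_
    (Ioi_subset_Ioi hδ).eventuallyLE
  exact (ae_restrict_mem measurableSet_Ioi).mono fun x (hx : 0 < x) =>
    mul_nonneg (Real.rpow_nonneg hx.le _) (hh _ (mul_pos k.cast_add_one_pos hx))

theorem abs_truncatedCoeff_div_le (hh : ∀ x, 0 < x → 0 ≤ h x)
    (hint : IntegrableOn (fun x => x ^ (α - 2) * h x) (Ioi 0)) {δ : ℝ} (hδ : 0 ≤ δ) (k : ℕ) :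
    |truncatedCoeff α h δ k| / (k + 1) ^ 2 ≤
      (∫ x in Ioi 0, x ^ (α - 2) * h x) * (1 / ((k : ℝ) + 1) ^ (1 + α)) := by
  rw [abs_of_nonneg (truncatedCoeff_nonneg hh hδ k), ← rpow_one_sub_div_sq, ← mul_div_assoc]
  exact div_le_div_of_nonneg_right (truncatedCoeff_le hh hint hδ k) (by positivity)

theorem summable_truncatedCoeff_bound (hα : 0 < α) (M : ℝ) :
    Summable fun k : ℕ => M * (1 / ((k : ℝ) + 1) ^ (1 + α)) :=
  (summable_one_div_succ_rpow (by linarith)).mul_left M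

theorem tendsto_versineSeries_truncatedCoeff (hα : 0 < α) (hh : ∀ x, 0 < x → 0 ≤ h x)
    (hint : IntegrableOn (fun x => x ^ (α - 2) * h x) (Ioi 0)) (ξ : ℝ) :
    Tendsto (fun δ => versineSeries (truncatedCoeff α h δ) ξ)
      (𝓝[>] 0) (𝓝 (2 * (∫ x in Ioi 0, x ^ (α - 2) * h x) * sigma1 α ξ)) := by
  rw [mul_right_comm, mul_comm, ← versineSeries_eq_two_mul_sigma1, ← versineSeries_const_mul]
  refine tendsto_tsum_of_dominated_convergence
    ((summable_truncatedCoeff_bound hα (∫ x in Ioi 0, x ^ (α - 2) * h x)).mul_left 2)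
    (fun k => ?_) ?_
  · refine Tendsto.const_mul _ (Tendsto.div_const ?_ _)
    simp only [← integral_rpow_mul_comp_mul_left k.cast_add_one_pos]
    exact tendsto_setIntegral_Ioi (integrableOn_rpow_mul_comp_mul_left hint k.cast_add_one_pos)
  · filter_upwards [self_mem_nhdsWithin] with δ hδ k
    exact (norm_versineSeries_term_le _ ξ k).trans
      (mul_le_mul_of_nonneg_left (abs_truncatedCoeff_div_le hh hint (le_of_lt hδ) k) two_pos.le)

theorem exists_oscDecay_sigma1_of_truncatedCoeff {ρ C : ℝ} (hα : 0 < α)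
    (hh : ∀ x, 0 < x → 0 ≤ h x) (hint : IntegrableOn (fun x => x ^ (α - 2) * h x) (Ioi 0))
    (hM : 0 < ∫ x in Ioi 0, x ^ (α - 2) * h x)
    (hdecay : ∀ δ ∈ Ioc (0 : ℝ) 1,
      OscDecay (versineSeries (truncatedCoeff α h δ)) 0 Real.pi ρ C) :
    ∃ C', OscDecay (sigma1 α) 0 Real.pi ρ C' := by
  refine ⟨_, .of_const_mul (mul_pos two_pos hM) (.of_tendsto (C := C) ?_ ?_
    fun ξ _ => tendsto_versineSeries_truncatedCoeff hα hh hint ξ)⟩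
  · filter_upwards [Ioc_mem_nhdsGT one_pos] with δ hδ using hdecay δ hδ
  · filter_upwards [self_mem_nhdsWithin] with δ hδ
    exact continuous_versineSeries (.of_nonneg_of_le (fun k => by positivity)
      (abs_truncatedCoeff_div_le hh hint (le_of_lt hδ)) (summable_truncatedCoeff_bound hα _))

end Truncation

/-! ### Decay of the oscillatory integrals of the symbol -/

theorem isLaplaceWeight_rpow (β : ℝ) : IsLaplaceWeight fun x => x ^ β where
  pos x hx := Real.rpow_pos_of_pos hx β
  integrableOn δ hδ := by
    refine integrable_of_isBigO_exp_neg one_half_pos (ContinuousOn.mul (fun x hx => ?_)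
      (by fun_prop)) ?_
    · exact (Real.continuousAt_rpow_const x β (.inl (hδ.trans_le hx).ne')).continuousWithinAt
    · simpa [mul_comm] using (Real.Gamma_integrand_isLittleO β).isBigO

theorem integrableOn_rpow_Ioc_zero_one {β : ℝ} (hβ : -1 < β) :
    IntegrableOn (fun x : ℝ => x ^ β) (Ioc 0 1) :=
  (intervalIntegrable_iff_integrableOn_Ioc_of_le zero_le_one).1
    (intervalIntegral.intervalIntegrable_rpow' hβ)

theorem exists_oscDecay_sigma1_of_one_lt {α : ℝ} (hα : 1 < α) :
    ∃ C, OscDecay (sigma1 α) 0 Real.pi (1 / 3) C := by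
  have hw := isLaplaceWeight_rpow (α - 2)
  obtain ⟨C, hC⟩ := hw.exists_oscDecay_versineSeries
    (integrableOn_rpow_Ioc_zero_one (by linarith))
  have hGamma : ∫ x in Ioi 0, x ^ (α - 2) * Real.exp (-x) = Real.Gamma (α - 1) := by
    rw [Real.Gamma_eq_integral (by linarith)]
    exact integral_congr_ae (.of_forall fun x => by ring_nf)
  refine exists_oscDecay_sigma1_of_truncatedCoeff (h := fun x => Real.exp (-x)) (by linarith)
    (fun x _ => Real.exp_nonneg _) ?_ ?_ hC
  · refine (Real.GammaIntegral_convergent (s := α - 1) (by linarith)).congr_fun (fun x _ => ?_)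
      measurableSet_Ioi
    ring_nf
  · rw [hGamma]
    exact Real.Gamma_pos_of_pos (by linarith)

theorem one_sub_exp_neg_pos {x : ℝ} (hx : 0 < x) : 0 < 1 - Real.exp (-x) :=
  sub_pos.2 (Real.exp_lt_one_iff.2 (neg_neg_of_pos hx))

theorem integrableOn_rpow_mul_one_sub_exp_neg {α : ℝ} (h0 : 0 < α) (h1 : α < 1) :
    IntegrableOn (fun x : ℝ => x ^ (α - 2) * (1 - Real.exp (-x))) (Ioi 0) := by
  have hmeas : Measurable fun x : ℝ => x ^ (α - 2) * (1 - Real.exp (-x)) := by fun_prop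
  have hnorm {x : ℝ} (hx : 0 < x) : ‖x ^ (α - 2) * (1 - Real.exp (-x))‖ =
      x ^ (α - 2) * (1 - Real.exp (-x)) :=
    Real.norm_of_nonneg (mul_nonneg (Real.rpow_nonneg hx.le _) (one_sub_exp_neg_pos hx).le)
  rw [← Ioc_union_Ioi_eq_Ioi zero_le_one, integrableOn_union]
  constructor
  · refine (integrableOn_rpow_Ioc_zero_one (β := α - 1) (by linarith)).mono'
      hmeas.aestronglyMeasurable ((ae_restrict_mem measurableSet_Ioc).mono fun x hx => ?_)
    rw [hnorm hx.1, show α - 1 = α - 2 + 1 by ring, Real.rpow_add_one hx.1.ne']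
    have := Real.rpow_nonneg hx.1.le (α - 2)
    gcongr
    linarith [Real.add_one_le_exp (-x)]
  · refine (integrableOn_Ioi_rpow_of_lt (show α - 2 < -1 by linarith) one_pos).mono'
      hmeas.aestronglyMeasurable ((ae_restrict_mem measurableSet_Ioi).mono fun x hx => ?_)
    have hx0 : 0 < x := one_pos.trans hx
    rw [hnorm hx0]
    exact mul_le_of_le_one_right (Real.rpow_nonneg hx0.le _) (sub_le_self _ (Real.exp_nonneg _))

theorem hasSecondDerivOn_const_mul_sub_versineSeries {b : ℕ → ℝ} (hb : Summable fun k => |b k|)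
    (A x y : ℝ) :
    HasSecondDerivOn (fun ξ => A * (Real.pi * ξ / 2 - ξ ^ 2 / 4) - versineSeries b ξ)
      (fun ξ => A * (Real.pi / 2 - ξ / 2) - sineSeries b ξ)
      (fun ξ => -(A / 2 + cosineSeries b ξ)) x y where
  hasDerivAt ξ _ := by
    have hlin := ((hasDerivAt_id' ξ).const_mul Real.pi).div_const 2
    have hsq := ((hasDerivAt_id' ξ).fun_pow 2).div_const 4
    refine (((hlin.fun_sub hsq).const_mul A).fun_sub
      (hasDerivAt_versineSeries hb ξ)).congr_deriv ?_
    push_cast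
    ring
  hasDerivAt' ξ _ := by
    have hlin := ((hasDerivAt_id' ξ).div_const 2).const_sub (Real.pi / 2)
    exact ((hlin.const_mul A).fun_sub (hasDerivAt_sineSeries hb ξ)).congr_deriv (by ring)
  continuousOn := (continuous_const.add (continuous_cosineSeries hb)).neg.continuousOn

namespace IsLaplaceWeight

variable {w : ℝ → ℝ} {δ : ℝ}

theorem integrableOn_half_add_poissonSum (hw : IsLaplaceWeight w) (hδ : 0 < δ)
    (hint : IntegrableOn w (Ioi δ)) (ξ : ℝ) :
    IntegrableOn (fun x => w x * (1 / 2 + poissonSum x ξ)) (Ioi δ) := by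
  simp_rw [mul_add]
  exact (hint.mul_const (1 / 2)).add (hw.integrableOn_mul_poissonSum hδ ξ)

theorem setIntegral_Ioi_one_le_half_add_cosineSeries (hw : IsLaplaceWeight w)
    (hδ : δ ∈ Ioc (0 : ℝ) 1) (hint : IntegrableOn w (Ioi δ)) (ξ : ℝ) :
    ∫ x in Ioi 1, w x * (1 / 2 + poissonSum x Real.pi) ≤
      (∫ x in Ioi δ, w x) / 2 + cosineSeries (laplaceCoeff w δ) ξ := by
  have hδ1 := Ioi_subset_Ioi hδ.2
  have hξ := hw.integrableOn_half_add_poissonSum hδ.1 hint ξ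
  calc _ ≤ ∫ x in Ioi 1, w x * (1 / 2 + poissonSum x ξ) := by
        refine setIntegral_mono_on ((hw.integrableOn_half_add_poissonSum hδ.1 hint _).mono_set hδ1)
          (hξ.mono_set hδ1) measurableSet_Ioi fun x hx => ?_
        have hx0 : 0 < x := one_pos.trans hx
        have := poissonSum_mono hx0 (Real.cos_pi ▸ Real.neg_one_le_cos ξ)
        have := (hw.pos x hx0).le
        gcongr
    _ ≤ ∫ x in Ioi δ, w x * (1 / 2 + poissonSum x ξ) := by
        refine setIntegral_mono_set hξ ((ae_restrict_mem measurableSet_Ioi).mono fun x hx => ?_)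
          hδ1.eventuallyLE
        have hx0 : 0 < x := hδ.1.trans hx
        exact mul_nonneg (hw.pos x hx0).le (half_add_poissonSum_pos hx0 ξ).le
    _ = _ := by
        simp_rw [mul_add]
        rw [integral_add (hint.mul_const _) (hw.integrableOn_mul_poissonSum hδ.1 ξ),
          integral_mul_const, mul_one_div, hw.cosineSeries_laplaceCoeff hδ.1]

theorem oscDecay_const_mul_sub_versineSeries (hw : IsLaplaceWeight w)
    (hδ : δ ∈ Ioc (0 : ℝ) 1) (hint : IntegrableOn w (Ioi δ)) :
    OscDecay (fun ξ => (∫ x in Ioi δ, w x) * (Real.pi * ξ / 2 - ξ ^ 2 / 4) -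
        versineSeries (laplaceCoeff w δ) ξ) 0 Real.pi (1 / 2)
      (6 * (∫ x in Ioi 1, w x * (1 / 2 + poissonSum x Real.pi)) ^ (-(1 / 2) : ℝ)) := by
  refine (hasSecondDerivOn_const_mul_sub_versineSeries (hw.summable_abs_laplaceCoeff hδ.1)
    (∫ x in Ioi δ, w x) 0 Real.pi).oscDecay_of_deriv2_le_neg Real.pi_pos.le ?_ fun ξ _ =>
    neg_le_neg (hw.setIntegral_Ioi_one_le_half_add_cosineSeries hδ hint ξ)
  exact setIntegral_Ioi_pos (fun x hx => mul_pos (hw.pos x (one_pos.trans hx))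
    (half_add_poissonSum_pos (one_pos.trans hx) _))
    ((hw.integrableOn_half_add_poissonSum hδ.1 hint _).mono_set (Ioi_subset_Ioi hδ.2))

end IsLaplaceWeight

theorem truncatedCoeff_one_sub_exp_neg {α δ : ℝ} (hα : α < 1) (hδ : 0 < δ) (k : ℕ) :
    truncatedCoeff α (fun x => 1 - Real.exp (-x)) δ k =
      (∫ x in Ioi δ, x ^ (α - 2)) * 1 - laplaceCoeff (fun x => x ^ (α - 2)) δ k := by
  rw [mul_one, laplaceCoeff, ← integral_sub (integrableOn_Ioi_rpow_of_lt (by linarith) hδ)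
    ((isLaplaceWeight_rpow _).integrableOn_exp hδ k), truncatedCoeff]
  exact integral_congr_ae (.of_forall fun x => by ring)

theorem versineSeries_truncatedCoeff_one_sub_exp_neg {α δ ξ : ℝ} (hα : α < 1) (hδ : 0 < δ)
    (hξ : ξ ∈ Icc 0 Real.pi) :
    versineSeries (truncatedCoeff α (fun x => 1 - Real.exp (-x)) δ) ξ =
      (∫ x in Ioi δ, x ^ (α - 2)) * (Real.pi * ξ / 2 - ξ ^ 2 / 4) -
        versineSeries (laplaceCoeff (fun x => x ^ (α - 2)) δ) ξ := by
  have hw := isLaplaceWeight_rpow (α - 2)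
  rw [funext (truncatedCoeff_one_sub_exp_neg hα hδ), versineSeries_sub, versineSeries_const_mul,
    versineSeries_one hξ]
  · simpa [div_eq_mul_inv] using
      (summable_one_div_succ_rpow one_lt_two).mul_left |∫ x in Ioi δ, x ^ (α - 2)|
  · exact .of_nonneg_of_le (fun k => by positivity) (fun k => div_le_self (abs_nonneg _)
      (one_le_pow₀ (le_add_of_nonneg_left k.cast_nonneg))) (hw.summable_abs_laplaceCoeff hδ)

theorem exists_oscDecay_sigma1_of_lt_one {α : ℝ} (h0 : 0 < α) (h1 : α < 1) :
    ∃ C, OscDecay (sigma1 α) 0 Real.pi (1 / 2) C := by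
  have hint := integrableOn_rpow_mul_one_sub_exp_neg h0 h1
  have hpos : 0 < ∫ x in Ioi 0, x ^ (α - 2) * (1 - Real.exp (-x)) := setIntegral_Ioi_pos
    (fun x hx => mul_pos (Real.rpow_pos_of_pos hx _) (one_sub_exp_neg_pos hx)) hint
  have hw := isLaplaceWeight_rpow (α - 2)
  refine exists_oscDecay_sigma1_of_truncatedCoeff h0 (fun x hx => (one_sub_exp_neg_pos hx).le)
    hint hpos fun δ hδ => (hw.oscDecay_const_mul_sub_versineSeries hδ
      (integrableOn_Ioi_rpow_of_lt (by linarith) hδ.1)).congr fun ξ hξ => ?_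
  rw [uIcc_of_le Real.pi_pos.le] at hξ
  exact (versineSeries_truncatedCoeff_one_sub_exp_neg h1 hδ.1 hξ).symm

theorem exists_oscDecay_sigma1_one : ∃ C, OscDecay (sigma1 1) 0 Real.pi (1 / 2) C := by
  have h := hasSecondDerivOn_const_mul_sub_versineSeries (b := fun _ => 0) (by simp) 1 0 Real.pi
  refine ⟨_, .of_const_mul two_pos (.congr (h.oscDecay_of_deriv2_le_neg Real.pi_pos.le one_half_pos
    fun ξ _ => by simp [cosineSeries]) fun ξ hξ => ?_)⟩
  rw [uIcc_of_le Real.pi_pos.le] at hξ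
  rw [← versineSeries_eq_two_mul_sigma1, one_mul, ← versineSeries_one hξ]
  simp [versineSeries]

theorem exists_oscDecay_sigma1_of_le_one {α : ℝ} (h0 : 0 < α) (h1 : α ≤ 1) :
    ∃ C, OscDecay (sigma1 α) 0 Real.pi (1 / 2) C := by
  rcases h1.lt_or_eq with h1 | rfl
  exacts [exists_oscDecay_sigma1_of_lt_one h0 h1, exists_oscDecay_sigma1_one]

theorem continuous_sigma1 {α : ℝ} (hα : 0 < α) : Continuous (sigma1 α) := by
  have h : Continuous (versineSeries fun k => ((k : ℝ) + 1) ^ (1 - α)) := by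
    refine continuous_versineSeries ((summable_one_div_succ_rpow (s := 1 + α) (by linarith)).congr
      fun k => ?_)
    rw [abs_of_nonneg (by positivity), rpow_one_sub_div_sq]
  simp only [funext (versineSeries_eq_two_mul_sigma1 α)] at h
  simpa using h.const_mul 2⁻¹

theorem sigma1_neg (α ξ : ℝ) : sigma1 α (-ξ) = sigma1 α ξ := by
  simp only [sigma1, mul_neg, neg_div, Real.sin_neg, neg_sq]

/-! ### The propagator as inner products with plane waves -/

theorem norm_Kker_le {α ρ C : ℝ} (hα : 0 < α) (h : OscDecay (sigma1 α) 0 Real.pi ρ C) {t : ℝ}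
    (ht : t ≠ 0) (n : ℤ) : ‖Kker α t n‖ ≤ C * |t| ^ (-ρ) := by
  have half (m : ℝ) :
      ‖∫ ξ in (0)..Real.pi, osc (fun ξ => m * ξ - sigma1 α ξ * t) ξ‖ ≤ C * |t| ^ (-ρ) := by
    rcases ht.lt_or_gt with ht | ht
    · rw [abs_of_neg ht, ← norm_integral_osc_neg]
      convert h (-m) (-t) (neg_pos.2 ht) using 6
      ring
    · rw [abs_of_pos ht]
      exact h m t ht
  set F := osc fun ξ => (n : ℝ) * ξ - sigma1 α ξ * t with hF
  have hint (a b : ℝ) : IntervalIntegrable F volume a b :=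
    (continuous_osc (by have := continuous_sigma1 hα; fun_prop)).intervalIntegrable a b
  have reflect : ∫ ξ in (-Real.pi)..0, F ξ
      = ∫ ξ in (0)..Real.pi, osc (fun ξ => -n * ξ - sigma1 α ξ * t) ξ := by
    rw [← neg_zero, ← intervalIntegral.integral_comp_neg, neg_zero]
    simp only [hF, osc, sigma1_neg, mul_neg, neg_mul]
  have hsplit : Kker α t n =
      (2 * Real.pi)⁻¹ • ((∫ ξ in (-Real.pi)..0, F ξ) + ∫ ξ in (0)..Real.pi, F ξ) := by
    rw [intervalIntegral.integral_add_adjacent_intervals (hint _ _) (hint _ _)]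
    rfl
  have hB : 0 ≤ C * |t| ^ (-ρ) := (norm_nonneg _).trans (half n)
  have hpi : (2 * Real.pi)⁻¹ * 2 ≤ 1 := by
    rw [mul_comm, ← div_eq_mul_inv, div_le_one (by positivity)]
    linarith [Real.two_le_pi]
  calc ‖Kker α t n‖
      ≤ (2 * Real.pi)⁻¹ * (C * |t| ^ (-ρ) + C * |t| ^ (-ρ)) := by
        rw [hsplit, reflect, norm_smul, Real.norm_of_nonneg (by positivity)]
        gcongr
        exact norm_add_le_of_le (half (-n)) (half n)
    _ = (2 * Real.pi)⁻¹ * 2 * (C * |t| ^ (-ρ)) := by ring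
    _ ≤ C * |t| ^ (-ρ) := mul_le_of_le_one_left hB hpi

theorem Kker_zero (α : ℝ) (n : ℤ) : Kker α 0 n = if n = 0 then 1 else 0 := by
  rw [Kker]
  split_ifs with hn
  · subst hn
    simp only [Int.cast_zero, zero_mul, mul_zero, sub_zero, Complex.ofReal_zero, Complex.exp_zero,
      intervalIntegral.integral_const, sub_neg_eq_add, ← two_mul, smul_smul]
    rw [inv_mul_cancel₀ Real.two_pi_pos.ne', one_smul]
  · have hphase (ξ : ℝ) : Complex.exp (Complex.I * (((n : ℝ) * ξ - sigma1 α ξ * 0) : ℝ)) =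
        Complex.exp (Complex.I * n * ξ) := by
      push_cast
      ring_nf
    have hper : Complex.exp (Complex.I * n * Real.pi)
        = Complex.exp (Complex.I * n * ((-Real.pi : ℝ) : ℂ)) := by
      rw [Complex.exp_eq_exp_iff_exists_int]
      exact ⟨n, by push_cast; ring⟩
    simp_rw [hphase]
    rw [integral_exp_mul_complex (by simp [hn]), hper, sub_self, zero_div, smul_zero]

/-- Lebesgue measure on `[-π, π]`, normalised to total mass one. -/
def circleMeasure : Measure (Icc (-Real.pi) Real.pi) :=
  (2 * Real.pi)⁻¹.toNNReal • volume.comap Subtype.val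

instance : IsFiniteMeasure circleMeasure := by
  have : IsFiniteMeasure (volume.comap (Subtype.val : Icc (-Real.pi) Real.pi → ℝ)) := by
    refine ⟨?_⟩
    rw [comap_subtype_coe_apply measurableSet_Icc, image_univ, Subtype.range_coe]
    exact isCompact_Icc.measure_lt_top
  unfold circleMeasure
  infer_instance

theorem integral_circleMeasure (f : ℝ → ℂ) :
    ∫ ξ, f ξ ∂circleMeasure = (2 * Real.pi)⁻¹ • ∫ ξ in (-Real.pi)..Real.pi, f ξ := by
  rw [circleMeasure, integral_smul_nnreal_measure, integral_subtype_comap measurableSet_Icc,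
    intervalIntegral.integral_of_le (by linarith [Real.pi_pos]), integral_Icc_eq_integral_Ioc,
    NNReal.smul_def, Real.coe_toNNReal _ (by positivity)]

/-- The continuous function `ξ ↦ e^{i(σ(ξ)t - nξ)}` on `[-π, π]`, as an element of `L²`. Its inner
product with `f` is the `n`-th Fourier coefficient of `e^{-iσt} f`. -/
def planeWave (σ : C(ℝ, ℝ)) (t : ℝ) (n : ℤ) : Lp ℂ 2 circleMeasure :=
  ContinuousMap.toLp 2 circleMeasure ℂ <| ContinuousMap.curry
    ⟨fun z : ℝ × Icc (-Real.pi) Real.pi => osc (fun ξ => σ ξ * z.1 - n * ξ) z.2,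
      by unfold osc; fun_prop⟩ t

theorem continuous_planeWave (σ : C(ℝ, ℝ)) (n : ℤ) : Continuous fun t => planeWave σ t n :=
  (ContinuousMap.toLp 2 circleMeasure ℂ).continuous.comp (ContinuousMap.continuous _)

theorem inner_planeWave (σ : C(ℝ, ℝ)) (t s : ℝ) (n m : ℤ) :
    inner ℂ (planeWave σ t n) (planeWave σ s m) =
      (2 * Real.pi)⁻¹ • ∫ ξ in (-Real.pi)..Real.pi,
        osc (fun ξ => ((n - m : ℤ) : ℝ) * ξ - σ ξ * (t - s)) ξ := by
  rw [planeWave, planeWave, ContinuousMap.inner_toLp, ← integral_circleMeasure]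
  refine integral_congr_ae (ae_of_all _ fun ξ => ?_)
  simp only [ContinuousMap.curry_apply, ContinuousMap.coe_mk]
  rw [conj_osc, osc, osc, osc, ← Complex.exp_add]
  push_cast
  ring_nf

section Sigma

variable {α : ℝ}

/-- The symbol `sigma1 α` bundled as a continuous map. -/
def sigmaMap (hα : 0 < α) : C(ℝ, ℝ) := ⟨sigma1 α, continuous_sigma1 hα⟩

theorem inner_planeWave_sigmaMap (hα : 0 < α) (t s : ℝ) (n m : ℤ) :
    inner ℂ (planeWave (sigmaMap hα) t n) (planeWave (sigmaMap hα) s m) = Kker α (t - s) (n - m) :=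
  inner_planeWave _ t s n m

theorem orthonormal_planeWave (hα : 0 < α) (t : ℝ) :
    Orthonormal ℂ (planeWave (sigmaMap hα) t) := by
  classical
  refine orthonormal_iff_ite.2 fun n m => ?_
  simp only [inner_planeWave_sigmaMap, sub_self, Kker_zero, sub_eq_zero]

theorem exists_inner_planeWave_eq_Uprop (hα : 0 < α) {φ : ℤ → ℂ}
    (hφ : Summable fun n => ‖φ n‖ ^ 2) :
    ∃ f : Lp ℂ 2 circleMeasure, ‖f‖ = √(∑' n, ‖φ n‖ ^ 2) ∧
      ∀ t n, inner ℂ (planeWave (sigmaMap hα) t n) f = Uprop α t φ n := by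
  have hmem : Memℓp φ 2 := memℓp_gen (by simpa using hφ)
  set ψ : lp (fun _ : ℤ => ℂ) 2 := ⟨φ, hmem⟩
  set hV := (orthonormal_planeWave hα 0).orthogonalFamily
  refine ⟨hV.linearIsometry ψ, ?_, fun t n => ?_⟩
  · rw [hV.linearIsometry.norm_map, lp.norm_eq_tsum_rpow (by norm_num) ψ, Real.sqrt_eq_rpow]
    simp [ψ]
  · have hsum := (hV.hasSum_linearIsometry ψ).mapL (innerSL ℂ (planeWave (sigmaMap hα) t n))
    refine (hsum.tsum_eq.symm.trans (tsum_congr fun m => ?_))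
    simp [ψ, inner_planeWave_sigmaMap, mul_comm]

theorem enorm_inner_planeWave_le {ρ C : ℝ} (hα : 0 < α) (hρ : 0 < ρ)
    (h : OscDecay (sigma1 α) 0 Real.pi ρ C) (t s : ℝ) (n m : ℤ) :
    ‖inner ℂ (planeWave (sigmaMap hα) t n) (planeWave (sigmaMap hα) s m)‖ₑ ≤
      ENNReal.ofReal (max C 1) * ‖t - s‖ₑ ^ (-ρ) := by
  rw [inner_planeWave_sigmaMap]
  rcases eq_or_ne (t - s) 0 with hts | hts
  · rw [hts, enorm_zero, ENNReal.zero_rpow_of_neg (neg_neg_of_pos hρ), ENNReal.mul_top (by simp)]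
    exact le_top
  · have hpos : 0 < |t - s| := abs_pos.2 hts
    rw [Real.enorm_eq_ofReal_abs, ENNReal.ofReal_rpow_of_pos hpos,
      ← ENNReal.ofReal_mul (by positivity), ← ofReal_norm]
    refine ENNReal.ofReal_le_ofReal ((norm_Kker_le hα h hts _).trans ?_)
    gcongr
    exact le_max_left C 1

end Sigma

/-! ### The Hardy–Littlewood–Sobolev inequality -/

theorem setLIntegral_Ioo_zero_rpow {r b : ℝ} (hr : -1 < r) (hb : 0 ≤ b) :
    ∫⁻ a in Ioo 0 b, ENNReal.ofReal (a ^ r) = ENNReal.ofReal (b ^ (r + 1) / (r + 1)) := by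
  have hint := (intervalIntegrable_iff_integrableOn_Ioo_of_le hb).1
    (intervalIntegral.intervalIntegrable_rpow' (a := 0) (b := b) hr)
  rw [← ofReal_integral_eq_lintegral_ofReal hint, ← integral_Ioc_eq_integral_Ioo,
    ← intervalIntegral.integral_of_le hb, integral_rpow (Or.inl hr),
    Real.zero_rpow (by linarith), sub_zero]
  filter_upwards [ae_restrict_mem measurableSet_Ioo] with a ha using Real.rpow_nonneg ha.1.le r

section WeakType

variable {X : Type*} [MeasurableSpace X] {μ ν : Measure X} {A : ℝ≥0∞} {ρ p : ℝ} {f : X → NNReal}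

theorem measure_lt_rpow_le (hp : 0 < p) (hf : Measurable f) {a : ℝ} (ha : 0 < a) :
    μ {s | a < f s} ≤ (∫⁻ s, (f s : ℝ≥0∞) ^ p ∂μ) * ENNReal.ofReal (a ^ (-p)) := by
  have hsub : {s | a < f s} ⊆ {s | ENNReal.ofReal (a ^ p) ≤ (f s : ℝ≥0∞) ^ p} := fun s hs => by
    rw [mem_ofPred_eq, ← ENNReal.ofReal_rpow_of_pos ha, ← ENNReal.ofReal_coe_nnreal]
    exact ENNReal.rpow_le_rpow (ENNReal.ofReal_le_ofReal (le_of_lt hs)) hp.le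
  have hap : 0 < a ^ p := Real.rpow_pos_of_pos ha p
  refine (measure_mono hsub).trans ((meas_ge_le_lintegral_div (by fun_prop)
    (ENNReal.ofReal_pos.2 hap).ne' ENNReal.ofReal_ne_top).trans_eq ?_)
  rw [Real.rpow_neg ha.le, ENNReal.ofReal_inv_of_pos hap, div_eq_mul_inv]

theorem restrict_measure_lt_le (hρ : ρ < 1) (hρ0 : 0 < ρ) (hp : p * (2 - ρ) = 2)
    (hν : ∀ E, MeasurableSet E → ν E ≤ A * μ E ^ (1 - ρ)) (hf : Measurable f) (b : NNReal)
    {a : ℝ} (ha : 0 < a) :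
    ν.restrict {s | f s ≤ b} {s | a < f s} ≤ (Ioo 0 (b : ℝ)).indicator
      (fun a => A * (∫⁻ s, (f s : ℝ≥0∞) ^ p ∂μ) ^ (1 - ρ) * ENNReal.ofReal (a ^ (p - 2))) a := by
  have hmeas : MeasurableSet {s | a < f s} := measurableSet_lt measurable_const (by fun_prop)
  by_cases hab : a < b
  · have hexp : -p * (1 - ρ) = p - 2 := by linarith
    have hmem : a ∈ Ioo 0 (b : ℝ) := ⟨ha, hab⟩
    rw [indicator_of_mem hmem, mul_assoc, ← hexp, Real.rpow_mul ha.le,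
      ← ENNReal.ofReal_rpow_of_pos (Real.rpow_pos_of_pos ha _),
      ← ENNReal.mul_rpow_of_nonneg _ _ (by linarith)]
    refine (Measure.restrict_apply_le _ _).trans ((hν _ hmeas).trans ?_)
    gcongr
    · exact measure_lt_rpow_le (by nlinarith) hf ha
  · have hempty : {s | a < f s} ∩ {s | f s ≤ b} = ∅ :=
      eq_empty_of_forall_notMem fun s hs =>
        hab (lt_of_lt_of_le hs.1 (NNReal.coe_le_coe.2 hs.2))
    simp [Measure.restrict_apply hmeas, hempty]

theorem setLIntegral_le_of_measure_le_rpow (hρ : ρ < 1) (hρ0 : 0 < ρ) (hp : p * (2 - ρ) = 2)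
    (hν : ∀ E, MeasurableSet E → ν E ≤ A * μ E ^ (1 - ρ)) (hf : Measurable f) (b : NNReal) :
    ∫⁻ s in {s | f s ≤ b}, f s ∂ν ≤
      A * (∫⁻ s, (f s : ℝ≥0∞) ^ p ∂μ) ^ (1 - ρ) * ENNReal.ofReal (b ^ (p - 1) / (p - 1)) := by
  have hp1 : 1 < p := by nlinarith
  set N := ∫⁻ s, (f s : ℝ≥0∞) ^ p ∂μ
  calc ∫⁻ s in {s | f s ≤ b}, f s ∂ν
      = ∫⁻ a in Ioi (0 : ℝ), ν.restrict {s | f s ≤ b} {s | a < f s} := by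
        rw [← lintegral_eq_lintegral_meas_lt _ (ae_of_all _ fun s => (f s).coe_nonneg)
          (by fun_prop)]
        simp only [ENNReal.ofReal_coe_nnreal]
    _ ≤ ∫⁻ a in Ioi (0 : ℝ), (Ioo 0 (b : ℝ)).indicator
          (fun a => A * N ^ (1 - ρ) * ENNReal.ofReal (a ^ (p - 2))) a :=
        setLIntegral_mono' measurableSet_Ioi fun a ha =>
          restrict_measure_lt_le hρ hρ0 hp hν hf b ha
    _ ≤ ∫⁻ a in Ioo 0 (b : ℝ), A * N ^ (1 - ρ) * ENNReal.ofReal (a ^ (p - 2)) := by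
        rw [← lintegral_indicator measurableSet_Ioo]
        exact setLIntegral_le_lintegral _ _
    _ = A * N ^ (1 - ρ) * ENNReal.ofReal (b ^ (p - 1) / (p - 1)) := by
        rw [lintegral_const_mul _ (by fun_prop), setLIntegral_Ioo_zero_rpow (by linarith)
          b.coe_nonneg, show p - 2 + 1 = p - 1 by ring]

variable {k : X → X → ℝ≥0∞}

theorem lintegral_lintegral_le_two_mul_of_symm [SFinite μ] (hk : Measurable (Function.uncurry k))
    (hsymm : ∀ t s, k t s = k s t) (hf : Measurable f) :
    ∫⁻ t, ∫⁻ s, f t * f s * k t s ∂μ ∂μ ≤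
      2 * ∫⁻ t, f t * ∫⁻ s in {s | f s ≤ f t}, f s * k t s ∂μ ∂μ := by
  set F : X × X → ℝ≥0∞ := {z | f z.2 ≤ f z.1}.indicator fun z => f z.1 * (f z.2 * k z.1 z.2)
  have hF : Measurable F := by
    have hk' : Measurable fun z : X × X => k z.1 z.2 := hk
    exact Measurable.indicator (by fun_prop) (measurableSet_le (by fun_prop) (by fun_prop))
  have hswap : ∫⁻ t, ∫⁻ s, F (s, t) ∂μ ∂μ = ∫⁻ t, ∫⁻ s, F (t, s) ∂μ ∂μ :=
    lintegral_lintegral_swap (hF.comp measurable_swap).aemeasurable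
  have hpoint (t s : X) : f t * f s * k t s ≤ F (t, s) + F (s, t) := by
    have hdiag {t s : X} (h : f s ≤ f t) : F (t, s) = f t * f s * k t s :=
      (indicator_of_mem (a := (t, s)) h _).trans (mul_assoc _ _ _).symm
    rcases le_total (f s) (f t) with h | h
    · exact (hdiag h).ge.trans (self_le_add_right _ _)
    · rw [mul_comm (f t : ℝ≥0∞), hsymm, ← hdiag h]
      exact self_le_add_left _ _
  calc ∫⁻ t, ∫⁻ s, f t * f s * k t s ∂μ ∂μ
      ≤ ∫⁻ t, ∫⁻ s, (F (t, s) + F (s, t)) ∂μ ∂μ :=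
        lintegral_mono fun t => lintegral_mono fun s => hpoint t s
    _ = 2 * ∫⁻ t, ∫⁻ s, F (t, s) ∂μ ∂μ := by
        rw [two_mul]
        nth_rewrite 2 [← hswap]
        rw [← lintegral_add_left hF.lintegral_prod_right']
        exact lintegral_congr fun t => lintegral_add_left (hF.comp measurable_prodMk_left) _
    _ = 2 * ∫⁻ t, f t * ∫⁻ s in {s | f s ≤ f t}, f s * k t s ∂μ ∂μ := by
        congr 1
        refine lintegral_congr fun t => ?_
        rw [← lintegral_indicator (measurableSet_le hf measurable_const),
          ← lintegral_const_mul' _ _ ENNReal.coe_ne_top]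
        refine lintegral_congr fun s => ?_
        by_cases h : f s ≤ f t <;> simp [F, h]

theorem lintegral_lintegral_mul_le_of_weakType [SFinite μ] (hρ : ρ < 1) (hρ0 : 0 < ρ)
    (hp : p * (2 - ρ) = 2) (hk : Measurable (Function.uncurry k)) (hsymm : ∀ t s, k t s = k s t)
    (hweak : ∀ t E, MeasurableSet E → ∫⁻ s in E, k t s ∂μ ≤ A * μ E ^ (1 - ρ))
    (hf : Measurable f) :
    ∫⁻ t, ∫⁻ s, f t * f s * k t s ∂μ ∂μ ≤
      2 * (A * ENNReal.ofReal (p - 1)⁻¹) * (∫⁻ t, (f t : ℝ≥0∞) ^ p ∂μ) ^ (2 - ρ) := by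
  have hp1 : 1 < p := by nlinarith
  set N := ∫⁻ s, (f s : ℝ≥0∞) ^ p ∂μ with hN
  have hinner (t : X) : ∫⁻ s in {s | f s ≤ f t}, f s * k t s ∂μ ≤
      A * N ^ (1 - ρ) * ENNReal.ofReal (f t ^ (p - 1) / (p - 1)) := by
    have hkt : Measurable (k t) := hk.comp measurable_prodMk_left
    have hle : MeasurableSet {s | f s ≤ f t} := measurableSet_le hf measurable_const
    refine le_trans (le_of_eq ?_) (setLIntegral_le_of_measure_le_rpow
      (ν := μ.withDensity (k t)) hρ hρ0 hp (fun E hE => ?_) hf (f t))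
    · rw [restrict_withDensity hle, lintegral_withDensity_eq_lintegral_mul _ hkt (by fun_prop)]
      simp only [Pi.mul_apply, mul_comm]
    · rw [withDensity_apply _ hE]
      exact hweak t E hE
  have hpow (t : X) : f t * (A * N ^ (1 - ρ) * ENNReal.ofReal (f t ^ (p - 1) / (p - 1))) =
      A * N ^ (1 - ρ) * ENNReal.ofReal (p - 1)⁻¹ * (f t : ℝ≥0∞) ^ p := by
    have hsucc : (f t : ℝ≥0∞) ^ p = f t * (f t : ℝ≥0∞) ^ (p - 1) := by
      simpa using ENNReal.rpow_add_of_nonneg (x := f t) 1 (p - 1) zero_le_one (by linarith)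
    rw [hsucc, div_eq_mul_inv, ENNReal.ofReal_mul (by positivity),
      ← ENNReal.ofReal_rpow_of_nonneg (f t).coe_nonneg (by linarith), ENNReal.ofReal_coe_nnreal]
    ring
  calc ∫⁻ t, ∫⁻ s, f t * f s * k t s ∂μ ∂μ
      ≤ 2 * ∫⁻ t, f t * ∫⁻ s in {s | f s ≤ f t}, f s * k t s ∂μ ∂μ :=
        lintegral_lintegral_le_two_mul_of_symm hk hsymm hf
    _ ≤ 2 * ∫⁻ t, A * N ^ (1 - ρ) * ENNReal.ofReal (p - 1)⁻¹ * (f t : ℝ≥0∞) ^ p ∂μ := by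
        gcongr 2 * ∫⁻ t, ?_ ∂μ with t
        exact (mul_le_mul_right (hinner t) _).trans_eq (hpow t)
    _ = 2 * (A * ENNReal.ofReal (p - 1)⁻¹) * N ^ (2 - ρ) := by
        rw [lintegral_const_mul _ (by fun_prop), ← hN, show 2 - ρ = (1 - ρ) + 1 by ring,
          ENNReal.rpow_add_of_nonneg _ _ (by linarith) zero_le_one, ENNReal.rpow_one]
        ring

end WeakType

theorem setLIntegral_Ioo_enorm_rpow_neg_le {ρ R : ℝ} (hρ : ρ < 1) (hR : 0 ≤ R) :
    ∫⁻ s in Ioo (-R) R, ‖s‖ₑ ^ (-ρ) ≤ ENNReal.ofReal (2 * (R ^ (1 - ρ) / (1 - ρ))) := by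
  have hpos : ∫⁻ s in Ioo 0 R, ‖s‖ₑ ^ (-ρ) = ENNReal.ofReal (R ^ (1 - ρ) / (1 - ρ)) := by
    rw [← neg_add_eq_sub, ← setLIntegral_Ioo_zero_rpow (by linarith) hR]
    refine setLIntegral_congr_fun measurableSet_Ioo fun s hs => ?_
    rw [Real.enorm_of_nonneg hs.1.le, ENNReal.ofReal_rpow_of_pos hs.1]
  have hneg : ∫⁻ s in Ioo (-R) 0, ‖s‖ₑ ^ (-ρ) = ∫⁻ s in Ioo 0 R, ‖s‖ₑ ^ (-ρ) := by
    have hpre : (fun s : ℝ => -s) ⁻¹' Ioo (-R) 0 = Ioo 0 R := by simp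
    rw [← hpre, ← (Measure.measurePreserving_neg volume).setLIntegral_comp_preimage_emb
      (MeasurableEquiv.neg ℝ).measurableEmbedding]
    simp only [enorm_neg]
  have hcover : (Ioo (-R) 0 ∪ Ioo 0 R : Set ℝ) =ᵐ[volume] (Ioo (-R) R : Set ℝ) := by
    have hdiff : Ioo (-R) 0 ∪ Ioo 0 R = Ioo (-R) R \ {0} := by
      ext s
      grind
    rw [hdiff]
    exact sdiff_null_ae_eq_self (measure_singleton 0)
  have hnonneg : 0 ≤ R ^ (1 - ρ) / (1 - ρ) := div_nonneg (Real.rpow_nonneg hR _) (by linarith)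
  rw [← setLIntegral_congr hcover, two_mul, ENNReal.ofReal_add hnonneg hnonneg]
  refine (lintegral_union_le _ _ _).trans_eq ?_
  rw [hneg, hpos]

theorem setLIntegral_sdiff_enorm_sub_rpow_neg_le {ρ R : ℝ} (hρ : 0 ≤ ρ) (hR : 0 < R) (t : ℝ)
    {E : Set ℝ} (hE : volume E ≤ ENNReal.ofReal R) :
    ∫⁻ s in E \ (t - ·) ⁻¹' Ioo (-R) R, ‖t - s‖ₑ ^ (-ρ) ≤ ENNReal.ofReal (R ^ (1 - ρ)) := by
  have hbound (s : ℝ) (hs : s ∈ E \ (t - ·) ⁻¹' Ioo (-R) R) :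
      ‖t - s‖ₑ ^ (-ρ) ≤ ENNReal.ofReal R ^ (-ρ) := by
    have hRs : R ≤ |t - s| := not_lt.1 fun h => hs.2 (abs_lt.1 h)
    rw [ENNReal.rpow_neg, ENNReal.rpow_neg, ENNReal.inv_le_inv, Real.enorm_eq_ofReal_abs]
    gcongr
  refine (setLIntegral_mono measurable_const hbound).trans ?_
  rw [setLIntegral_const]
  calc ENNReal.ofReal R ^ (-ρ) * volume (E \ (t - ·) ⁻¹' Ioo (-R) R)
      ≤ ENNReal.ofReal R ^ (-ρ) * ENNReal.ofReal R := by
        gcongr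
        exact (measure_mono sdiff_subset).trans hE
    _ = ENNReal.ofReal (R ^ (1 - ρ)) := by
        rw [ENNReal.ofReal_rpow_of_pos hR, ← ENNReal.ofReal_mul (by positivity),
          ← Real.rpow_add_one hR.ne', neg_add_eq_sub]

theorem setLIntegral_enorm_sub_rpow_neg_le {ρ : ℝ} (hρ0 : 0 < ρ) (hρ : ρ < 1) (t : ℝ) (E : Set ℝ) :
    ∫⁻ s in E, ‖t - s‖ₑ ^ (-ρ) ≤ ENNReal.ofReal (2 / (1 - ρ) + 1) * volume E ^ (1 - ρ) := by
  have hρ1 : 0 < 1 - ρ := sub_pos.2 hρ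
  rcases eq_or_ne (volume E) 0 with hz | hz
  · simp [Measure.restrict_eq_zero.2 hz]
  rcases eq_or_ne (volume E) ⊤ with hi | hi
  · rw [hi, ENNReal.top_rpow_of_pos hρ1, ENNReal.mul_top (ENNReal.ofReal_pos.2 (by positivity)).ne']
    exact le_top
  obtain ⟨R, hR, hvol⟩ : ∃ R, 0 < R ∧ volume E = ENNReal.ofReal R :=
    ⟨_, ENNReal.toReal_pos hz hi, (ENNReal.ofReal_toReal hi).symm⟩
  have near : ∫⁻ s in (t - ·) ⁻¹' Ioo (-R) R, ‖t - s‖ₑ ^ (-ρ) ≤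
      ENNReal.ofReal (2 * (R ^ (1 - ρ) / (1 - ρ))) :=
    ((Measure.measurePreserving_sub_left volume t).setLIntegral_comp_preimage_emb
      (MeasurableEquiv.subLeft t).measurableEmbedding (‖·‖ₑ ^ (-ρ)) _).trans_le
      (setLIntegral_Ioo_enorm_rpow_neg_le hρ hR.le)
  calc ∫⁻ s in E, ‖t - s‖ₑ ^ (-ρ)
      ≤ ENNReal.ofReal (2 * (R ^ (1 - ρ) / (1 - ρ))) + ENNReal.ofReal (R ^ (1 - ρ)) := by
        rw [← lintegral_inter_add_sdiff _ E
          ((measurable_const.sub measurable_id : Measurable (t - ·)) measurableSet_Ioo)]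
        exact add_le_add ((lintegral_mono_set inter_subset_right).trans near)
          (setLIntegral_sdiff_enorm_sub_rpow_neg_le hρ0.le hR t hvol.le)
    _ = ENNReal.ofReal (2 / (1 - ρ) + 1) * volume E ^ (1 - ρ) := by
        rw [hvol, ENNReal.ofReal_rpow_of_pos hR, ← ENNReal.ofReal_add (by positivity)
          (by positivity), ← ENNReal.ofReal_mul (by positivity)]
        ring_nf

/-! ### The endpoint estimate by `TT*` -/

theorem le_rpow_inv_of_sq_le_mul_rpow {ρ : ℝ} {x B : ℝ≥0∞} (hρ0 : 0 < ρ) (hρ : ρ < 2)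
    (hx : x ≠ ⊤) (h : x ^ 2 ≤ B * x ^ (2 - ρ)) : x ≤ B ^ ρ⁻¹ := by
  rcases eq_or_ne x 0 with rfl | hx0
  · exact zero_le
  have hsplit : x ^ 2 = x ^ ρ * x ^ (2 - ρ) := by
    rw [← ENNReal.rpow_add _ _ hx0 hx, add_sub_cancel, ENNReal.rpow_two]
  rw [hsplit] at h
  rw [ENNReal.le_rpow_inv_iff hρ0]
  exact (ENNReal.mul_le_mul_iff_left (ENNReal.rpow_pos (pos_iff_ne_zero.2 hx0) hx).ne'
    (ENNReal.rpow_ne_top_of_nonneg (by linarith) hx)).1 h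

section Hilbert

variable {H : Type*} [NormedAddCommGroup H] [InnerProductSpace ℂ H]

theorem enorm_inner_symm (x y : H) : ‖inner ℂ x y‖ₑ = ‖inner ℂ y x‖ₑ :=
  congrArg ENNReal.ofNNReal (NNReal.eq (norm_inner_symm x y))

theorem enorm_inner_le (x y : H) : ‖inner ℂ x y‖ₑ ≤ ‖x‖ₑ * ‖y‖ₑ :=
  ENNReal.coe_le_coe.2 (nnnorm_inner_le_nnnorm x y)

theorem enorm_inner_smul_smul (a b : NNReal) (x y : H) :
    ‖inner ℂ ((a : ℝ) • x) ((b : ℝ) • y)‖ₑ = a * b * ‖inner ℂ x y‖ₑ := by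
  rw [inner_smul_left_eq_smul, inner_smul_right_eq_smul, enorm_smul, enorm_smul, NNReal.enorm_eq,
    NNReal.enorm_eq, mul_assoc]

variable [CompleteSpace H] {X : Type*} [MeasurableSpace X] {μ : Measure X}

theorem enorm_integral_sq_le (Z : X → H) :
    ‖∫ t, Z t ∂μ‖ₑ ^ 2 ≤ ∫⁻ t, ∫⁻ s, ‖inner ℂ (Z t) (Z s)‖ₑ ∂μ ∂μ := by
  by_cases hZ : Integrable Z μ
  swap
  · simp [integral_undef hZ]
  set S := ∫ t, Z t ∂μ with hS
  calc ‖S‖ₑ ^ 2 = ‖∫ t, inner ℂ S (Z t) ∂μ‖ₑ := by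
        rw [integral_inner hZ, inner_self_eq_norm_sq_to_K, ← RCLike.ofReal_pow,
          ← ofReal_norm (E := ℂ), RCLike.norm_ofReal, abs_of_nonneg (by positivity),
          ENNReal.ofReal_pow (norm_nonneg _), ofReal_norm]
    _ ≤ ∫⁻ t, ‖inner ℂ S (Z t)‖ₑ ∂μ := enorm_integral_le_lintegral_enorm _
    _ = ∫⁻ t, ‖∫ s, inner ℂ (Z t) (Z s) ∂μ‖ₑ ∂μ := by
        refine lintegral_congr fun t => ?_
        rw [integral_inner hZ, ← hS, enorm_inner_symm]
    _ ≤ ∫⁻ t, ∫⁻ s, ‖inner ℂ (Z t) (Z s)‖ₑ ∂μ ∂μ :=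
        lintegral_mono fun t => enorm_integral_le_lintegral_enorm _

theorem exists_lintegral_enorm_inner_eq {Y : X → H} (hY : Integrable Y μ) (f : H) :
    ∃ c : X → ℂ, (∀ t, ‖c t‖ₑ ≤ 1) ∧
      ∫⁻ t, ‖inner ℂ (Y t) f‖ₑ ∂μ = ‖inner ℂ f (∫ t, c t • Y t ∂μ)‖ₑ := by
  set c : X → ℂ := fun t => inner ℂ (Y t) f / ‖inner ℂ (Y t) f‖
  have hc (t : X) : ‖c t‖ ≤ 1 := by simpa [c] using div_self_le_one _
  have hcm : AEStronglyMeasurable c μ := by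
    have hinner := (hY.1.inner (𝕜 := ℂ) (aestronglyMeasurable_const (b := f))).aemeasurable
    exact (hinner.div (Complex.measurable_ofReal.comp_aemeasurable
      hinner.norm)).aestronglyMeasurable
  have hphase (t : X) : inner ℂ f (c t • Y t) = (‖inner ℂ (Y t) f‖ : ℂ) := by
    have hconj : inner ℂ (Y t) f * inner ℂ f (Y t) = (‖inner ℂ (Y t) f‖ : ℂ) ^ 2 := by
      rw [← inner_conj_symm f, Complex.mul_conj']
    rw [inner_smul_right, div_mul_eq_mul_div, hconj, sq, mul_self_div_self]
  refine ⟨c, fun t => enorm_le_coe.2 (hc t), ?_⟩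
  have hint : Integrable (fun t => c t • Y t) μ := hY.bdd_smul 1 hcm (ae_of_all _ hc)
  rw [← integral_inner hint, integral_congr_ae (ae_of_all _ hphase), integral_complex_ofReal,
    ← ofReal_norm, Complex.norm_real, Real.norm_of_nonneg (integral_nonneg fun t => norm_nonneg _),
    ofReal_integral_norm_eq_lintegral_enorm (hY.inner_const f)]

theorem sq_lintegral_enorm_inner_le {Y : X → H} (hY : Integrable Y μ) (f : H) :
    (∫⁻ t, ‖inner ℂ (Y t) f‖ₑ ∂μ) ^ 2 ≤
      ‖f‖ₑ ^ 2 * ∫⁻ t, ∫⁻ s, ‖inner ℂ (Y t) (Y s)‖ₑ ∂μ ∂μ := by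
  obtain ⟨c, hc, hcf⟩ := exists_lintegral_enorm_inner_eq hY f
  have hpair (t s : X) : ‖inner ℂ (c t • Y t) (c s • Y s)‖ₑ ≤ ‖inner ℂ (Y t) (Y s)‖ₑ := by
    rw [inner_smul_left, inner_smul_right, enorm_mul, enorm_mul, RCLike.enorm_conj]
    exact (mul_le_of_le_one_left' (hc t)).trans (mul_le_of_le_one_left' (hc s))
  calc (∫⁻ t, ‖inner ℂ (Y t) f‖ₑ ∂μ) ^ 2
      ≤ (‖f‖ₑ * ‖∫ t, c t • Y t ∂μ‖ₑ) ^ 2 := by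
        rw [hcf]
        gcongr
        exact enorm_inner_le f _
    _ ≤ ‖f‖ₑ ^ 2 * ∫⁻ t, ∫⁻ s, ‖inner ℂ (c t • Y t) (c s • Y s)‖ₑ ∂μ ∂μ := by
        rw [mul_pow]
        gcongr
        exact enorm_integral_sq_le _
    _ ≤ ‖f‖ₑ ^ 2 * ∫⁻ t, ∫⁻ s, ‖inner ℂ (Y t) (Y s)‖ₑ ∂μ ∂μ := by
        gcongr with t s
        exact hpair t s

/-- The constant of the endpoint estimate for a kernel of weak type with constant `A`. -/
def endpointConst (ρ : ℝ) (A : ℝ≥0∞) : ℝ≥0∞ :=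
  2 * (A * ENNReal.ofReal (2 / (2 - ρ) - 1)⁻¹)

variable {W : X → H} {A : ℝ≥0∞} {ρ : ℝ}

theorem sq_lintegral_mul_enorm_inner_le_of_weakType [SFinite μ] {w : X → NNReal} (hρ0 : 0 < ρ)
    (hρ : ρ < 1) (hW : StronglyMeasurable W)
    (hweak : ∀ t E, MeasurableSet E →
      ∫⁻ s in E, ‖inner ℂ (W t) (W s)‖ₑ ∂μ ≤ A * μ E ^ (1 - ρ))
    (hw : Measurable w) (hint : Integrable (fun t => (w t : ℝ) • W t) μ) (f : H) :
    (∫⁻ t, w t * ‖inner ℂ (W t) f‖ₑ ∂μ) ^ 2 ≤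
      ‖f‖ₑ ^ 2 * endpointConst ρ A * (∫⁻ t, (w t : ℝ≥0∞) ^ (2 / (2 - ρ)) ∂μ) ^ (2 - ρ) := by
  have hkm : Measurable (Function.uncurry fun t s => ‖inner ℂ (W t) (W s)‖ₑ) :=
    ((hW.comp_measurable measurable_fst).inner (hW.comp_measurable measurable_snd)).enorm
  have hweight (t : X) : ‖inner ℂ ((w t : ℝ) • W t) f‖ₑ = w t * ‖inner ℂ (W t) f‖ₑ := by
    rw [inner_smul_left_eq_smul, enorm_smul, NNReal.enorm_eq]
  have hTT := sq_lintegral_enorm_inner_le hint f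
  simp only [hweight, enorm_inner_smul_smul] at hTT
  rw [mul_assoc]
  exact hTT.trans (mul_le_mul_right (lintegral_lintegral_mul_le_of_weakType hρ hρ0
    (div_mul_cancel₀ 2 (by linarith)) hkm (fun _ _ => enorm_inner_symm _ _) hweak hw) _)

theorem lintegral_enorm_inner_rpow_le_of_isFiniteMeasure [IsFiniteMeasure μ] (hρ0 : 0 < ρ)
    (hρ : ρ < 1) (hW : StronglyMeasurable W) (hW1 : ∀ t, ‖W t‖ ≤ 1)
    (hweak : ∀ t E, MeasurableSet E →
      ∫⁻ s in E, ‖inner ℂ (W t) (W s)‖ₑ ∂μ ≤ A * μ E ^ (1 - ρ)) (f : H) :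
    ∫⁻ t, ‖inner ℂ (W t) f‖ₑ ^ (2 / ρ) ∂μ ≤ (‖f‖ₑ ^ 2 * endpointConst ρ A) ^ ρ⁻¹ := by
  have h2ρ : 2 < 2 / ρ := by rw [lt_div_iff₀ hρ0]; linarith
  set u : X → NNReal := fun t => ‖inner ℂ (W t) f‖₊
  have hum : Measurable u := (hW.inner (𝕜 := ℂ) stronglyMeasurable_const).nnnorm.measurable
  have hle (t : X) : u t ≤ ‖f‖₊ :=
    (norm_inner_le_norm (𝕜 := ℂ) (W t) f).trans (mul_le_of_le_one_left (norm_nonneg f) (hW1 t))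
  set w : X → NNReal := fun t => u t ^ (2 / ρ - 1)
  have hwm : Measurable w := hum.pow_const _
  have hcoe (t : X) : (w t : ℝ≥0∞) = ‖inner ℂ (W t) f‖ₑ ^ (2 / ρ - 1) :=
    ENNReal.coe_rpow_of_nonneg _ (by linarith)
  have hint : Integrable (fun t => (w t : ℝ) • W t) μ := by
    refine .of_bound (hwm.coe_nnreal_real.stronglyMeasurable.smul hW).aestronglyMeasurable
      (‖f‖ ^ (2 / ρ - 1)) (ae_of_all _ fun t => ?_)
    rw [norm_smul, Real.norm_of_nonneg (w t).coe_nonneg]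
    refine (mul_le_of_le_one_right (w t).coe_nonneg (hW1 t)).trans ?_
    exact_mod_cast NNReal.rpow_le_rpow (hle t) (by linarith)
  set x := ∫⁻ t, ‖inner ℂ (W t) f‖ₑ ^ (2 / ρ) ∂μ
  have hwf : ∫⁻ t, w t * ‖inner ℂ (W t) f‖ₑ ∂μ = x := by
    refine lintegral_congr fun t => ?_
    rw [hcoe]
    simpa using (ENNReal.rpow_add_of_nonneg (2 / ρ - 1) 1 (by linarith) zero_le_one).symm
  have hwp : ∫⁻ t, (w t : ℝ≥0∞) ^ (2 / (2 - ρ)) ∂μ = x := by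
    refine lintegral_congr fun t => ?_
    rw [hcoe, ← ENNReal.rpow_mul]
    congr 1
    field_simp [(by linarith : 2 - ρ ≠ 0)]
  have hxtop : x ≠ ⊤ := by
    refine (IsFiniteMeasure.lintegral_lt_top_of_bounded_to_ennreal μ
      ⟨‖f‖₊ ^ (2 / ρ), fun t => ?_⟩).ne
    rw [ENNReal.coe_rpow_of_nonneg _ (by linarith)]
    exact ENNReal.rpow_le_rpow (ENNReal.coe_le_coe.2 (hle t)) (by linarith)
  have hsq := sq_lintegral_mul_enorm_inner_le_of_weakType hρ0 hρ hW hweak hwm hint f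
  rw [hwf, hwp] at hsq
  exact le_rpow_inv_of_sq_le_mul_rpow hρ0 (by linarith) hxtop hsq

theorem lintegral_enorm_inner_rpow_le [SigmaFinite μ] (hρ0 : 0 < ρ) (hρ : ρ < 1)
    (hW : StronglyMeasurable W) (hW1 : ∀ t, ‖W t‖ ≤ 1)
    (hweak : ∀ t E, MeasurableSet E →
      ∫⁻ s in E, ‖inner ℂ (W t) (W s)‖ₑ ∂μ ≤ A * μ E ^ (1 - ρ)) (f : H) :
    ∫⁻ t, ‖inner ℂ (W t) f‖ₑ ^ (2 / ρ) ∂μ ≤ (‖f‖ₑ ^ 2 * endpointConst ρ A) ^ ρ⁻¹ := by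
  refine lintegral_le_of_forall_fin_meas_le _ fun S hS hSfin => ?_
  have : Fact (μ S < ⊤) := ⟨hSfin.lt_top⟩
  refine lintegral_enorm_inner_rpow_le_of_isFiniteMeasure hρ0 hρ hW hW1 (fun t E hE => ?_) f
  rw [Measure.restrict_restrict hE, Measure.restrict_apply hE]
  exact hweak t _ (hE.inter hS)

end Hilbert

theorem exists_measurable_iSup_le_two_mul {X : Type*} [MeasurableSpace X] {F : ℕ → X → ℝ≥0∞}
    (hF : ∀ n, Measurable (F n)) (htop : ∀ t, ⨆ n, F n t ≠ ⊤) :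
    ∃ n : X → ℕ, Measurable n ∧ ∀ t, ⨆ n, F n t ≤ 2 * F (n t) t := by
  classical
  have hex (t : X) : ∃ n, ⨆ n, F n t ≤ 2 * F n t := by
    rcases eq_or_ne (⨆ n, F n t) 0 with hz | hz
    · exact ⟨0, hz.trans_le zero_le⟩
    · obtain ⟨n, hn⟩ := lt_iSup_iff.1 (ENNReal.half_lt_self hz (htop t))
      exact ⟨n, by rw [mul_comm]; exact ENNReal.div_le_iff (by simp) (by simp) |>.1 hn.le⟩
  exact ⟨fun t => Nat.find (hex t), measurable_find hex fun n =>
    measurableSet_le (.iSup hF) ((hF n).const_mul 2), fun t => Nat.find_spec (hex t)⟩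

theorem lintegral_iSup_enorm_inner_rpow_le {H X ι : Type*} [NormedAddCommGroup H]
    [InnerProductSpace ℂ H] [CompleteSpace H] [MeasurableSpace X] {μ : Measure X} [SigmaFinite μ]
    [Countable ι] [Nonempty ι] {V : X → ι → H} {k : X → X → ℝ≥0∞} {A : ℝ≥0∞} {ρ : ℝ} (hρ0 : 0 < ρ)
    (hρ : ρ < 1) (hV : ∀ n, StronglyMeasurable fun t => V t n) (hV1 : ∀ t n, ‖V t n‖ ≤ 1)
    (hk : ∀ t s n m, ‖inner ℂ (V t n) (V s m)‖ₑ ≤ k t s)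
    (hweak : ∀ t E, MeasurableSet E → ∫⁻ s in E, k t s ∂μ ≤ A * μ E ^ (1 - ρ)) (f : H) :
    ∫⁻ t, (⨆ n, ‖inner ℂ (V t n) f‖ₑ) ^ (2 / ρ) ∂μ ≤
      2 ^ (2 / ρ) * (‖f‖ₑ ^ 2 * endpointConst ρ A) ^ ρ⁻¹ := by
  have h2ρ : 0 ≤ 2 / ρ := by positivity
  obtain ⟨e, he⟩ := exists_surjective_nat ι
  have hbound (t : X) (n : ι) : ‖inner ℂ (V t n) f‖ₑ ≤ ‖f‖ₑ :=
    (enorm_inner_le _ _).trans (mul_le_of_le_one_left' (enorm_le_coe.2 (hV1 t n)))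
  obtain ⟨n, hn, hmax⟩ := exists_measurable_iSup_le_two_mul
    (F := fun i t => ‖inner ℂ (V t (e i)) f‖ₑ)
    (fun i => ((hV (e i)).inner stronglyMeasurable_const).enorm)
    fun t => ne_top_of_le_ne_top enorm_ne_top (iSup_le fun i => hbound t (e i))
  set W : X → H := fun t => V t (e (n t))
  have hW : StronglyMeasurable W :=
    (stronglyMeasurable_uncurry_of_continuous_of_stronglyMeasurable (u := fun i t => V t (e i))
      (fun _ => continuous_of_discreteTopology) fun i => hV (e i)).comp_measurable
      (hn.prodMk measurable_id)
  calc ∫⁻ t, (⨆ n, ‖inner ℂ (V t n) f‖ₑ) ^ (2 / ρ) ∂μ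
      ≤ ∫⁻ t, 2 ^ (2 / ρ) * ‖inner ℂ (W t) f‖ₑ ^ (2 / ρ) ∂μ := by
        gcongr with t
        rw [← ENNReal.mul_rpow_of_nonneg _ _ h2ρ]
        gcongr
        exact (he.iSup_comp fun n => ‖inner ℂ (V t n) f‖ₑ).symm.trans_le (hmax t)
    _ = 2 ^ (2 / ρ) * ∫⁻ t, ‖inner ℂ (W t) f‖ₑ ^ (2 / ρ) ∂μ :=
        lintegral_const_mul' _ _ (ENNReal.rpow_ne_top_of_nonneg h2ρ ENNReal.ofNat_ne_top)
    _ ≤ 2 ^ (2 / ρ) * (‖f‖ₑ ^ 2 * endpointConst ρ A) ^ ρ⁻¹ := by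
        gcongr
        exact lintegral_enorm_inner_rpow_le hρ0 hρ hW (fun t => hV1 t _) (fun t E hE =>
          (lintegral_mono fun s => hk t s _ _).trans (hweak t E hE)) f

/-! ### Interpolation with the conservation law -/

section Interpolation

variable {r : ℝ≥0∞} {N : ℝ≥0∞}

theorem iSup_enorm_le_of_tsum_sq_le {g : ℤ → ℂ} (hg : ∑' n, ‖g n‖ₑ ^ 2 ≤ N ^ 2) :
    ⨆ n, ‖g n‖ₑ ≤ N :=
  iSup_le fun n => (ENNReal.pow_le_pow_left_iff two_ne_zero).1 ((ENNReal.le_tsum n).trans hg)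

theorem lrNormZ_le_rpow_mul_rpow {g : ℤ → ℂ} (hr : 2 ≤ r) (hg : ∑' n, ‖g n‖ₑ ^ 2 ≤ N ^ 2) :
    lrNormZ r g ≤ N ^ (2 * r⁻¹.toReal) * (⨆ n, ‖g n‖ₑ) ^ (1 - 2 * r⁻¹.toReal) := by
  rw [lrNormZ]
  split_ifs with htop
  · simp [htop, ← enorm_eq_nnnorm]
  set R := r.toReal
  have hR : 2 ≤ R := by simpa [R] using ENNReal.toReal_mono htop hr
  set G := ⨆ n, ‖g n‖ₑ
  have hpoint (n : ℤ) : ‖g n‖ₑ ^ R ≤ G ^ (R - 2) * ‖g n‖ₑ ^ 2 := by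
    have hsplit : ‖g n‖ₑ ^ R = ‖g n‖ₑ ^ (R - 2) * ‖g n‖ₑ ^ 2 := by
      rw [← ENNReal.rpow_two, ← ENNReal.rpow_add_of_nonneg _ _ (by linarith) zero_le_two,
        sub_add_cancel]
    rw [hsplit]
    gcongr
    exact le_iSup (fun n => ‖g n‖ₑ) n
  have hsum : ∑' n, ‖g n‖ₑ ^ R ≤ N ^ 2 * G ^ (R - 2) := by
    refine (ENNReal.tsum_le_tsum hpoint).trans ?_
    rw [ENNReal.tsum_mul_left, mul_comm]
    gcongr
  calc (∑' n, ‖g n‖ₑ ^ R) ^ (1 / R) ≤ (N ^ 2 * G ^ (R - 2)) ^ (1 / R) := by gcongr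
    _ = N ^ (2 * r⁻¹.toReal) * G ^ (1 - 2 * r⁻¹.toReal) := by
        rw [ENNReal.mul_rpow_of_nonneg _ _ (by positivity), ← ENNReal.rpow_two, ← ENNReal.rpow_mul,
          ← ENNReal.rpow_mul, ENNReal.toReal_inv, sub_mul, mul_one_div_cancel (by positivity),
          one_div]

variable {q : ℝ≥0∞} {ρ : ℝ}

theorem two_div_le_mul_of_admissible (hρ : 0 < ρ) (hq : q ≠ ⊤)
    (hadm : ENNReal.ofReal ρ⁻¹ / q + r⁻¹ ≤ 1 / 2) :
    2 / ρ ≤ q.toReal * (1 - 2 * r⁻¹.toReal) := by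
  have hq0 : 0 < q.toReal := by
    refine ENNReal.toReal_pos (fun hq0 => ?_) hq
    rw [hq0, ENNReal.div_zero (ENNReal.ofReal_pos.2 (inv_pos.2 hρ)).ne', top_add] at hadm
    simp at hadm
  have hreal := ENNReal.toReal_mono (by simp) hadm
  have hfin : ENNReal.ofReal ρ⁻¹ / q + r⁻¹ ≠ ⊤ := ne_top_of_le_ne_top (by simp) hadm
  rw [ENNReal.toReal_add (ENNReal.add_ne_top.1 hfin).1 (ENNReal.add_ne_top.1 hfin).2,
    ENNReal.toReal_div, ENNReal.toReal_ofReal (by positivity), ← le_sub_iff_add_le,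
    div_le_iff₀ hq0, ENNReal.toReal_div, ENNReal.toReal_one, ENNReal.toReal_ofNat] at hreal
  rw [div_eq_mul_inv]
  linarith

theorem rpow_mul_rpow_rpow_le {x : ℝ≥0∞} {θ p Q : ℝ} (hθ : 0 ≤ θ) (hp : 0 ≤ p) (hQ : 0 ≤ Q)
    (hpQ : p ≤ Q * (1 - θ)) (hx : x ≤ N) :
    (N ^ θ * x ^ (1 - θ)) ^ Q ≤ N ^ (Q - p) * x ^ p :=
  calc (N ^ θ * x ^ (1 - θ)) ^ Q = N ^ (θ * Q) * (x ^ (Q * (1 - θ) - p) * x ^ p) := by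
        rw [ENNReal.mul_rpow_of_nonneg _ _ hQ, ← ENNReal.rpow_mul, ← ENNReal.rpow_mul,
          ← ENNReal.rpow_add_of_nonneg _ _ (by linarith) hp, sub_add_cancel, mul_comm Q]
    _ ≤ N ^ (θ * Q) * (N ^ (Q * (1 - θ) - p) * x ^ p) := by
        gcongr
    _ = N ^ (Q - p) * x ^ p := by
        rw [← mul_assoc, ← ENNReal.rpow_add_of_nonneg _ _ (by positivity) (by linarith)]
        ring_nf

theorem lrNormZ_rpow_le {g : ℤ → ℂ} {p Q : ℝ} (hr : r⁻¹ ≤ 1 / 2) (hp : 0 ≤ p) (hQ : 0 ≤ Q)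
    (hpQ : p ≤ Q * (1 - 2 * r⁻¹.toReal)) (hg : ∑' n, ‖g n‖ₑ ^ 2 ≤ N ^ 2) :
    lrNormZ r g ^ Q ≤ N ^ (Q - p) * (⨆ n, ‖g n‖ₑ) ^ p := by
  rw [one_div, ENNReal.inv_le_inv] at hr
  exact (ENNReal.rpow_le_rpow (lrNormZ_le_rpow_mul_rpow hr hg) hQ).trans
    (rpow_mul_rpow_rpow_le (by positivity) hp hQ hpQ (iSup_enorm_le_of_tsum_sq_le hg))

theorem LqLrNorm_le_of_endpoint {u : ℝ → ℤ → ℂ} {K : ℝ≥0∞} (hρ : 0 < ρ)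
    (hadm : ENNReal.ofReal ρ⁻¹ / q + r⁻¹ ≤ 1 / 2) (hN : N ≠ ⊤)
    (hcons : ∀ t, ∑' n, ‖u t n‖ₑ ^ 2 ≤ N ^ 2)
    (hend : ∫⁻ t, (⨆ n, ‖u t n‖ₑ) ^ (2 / ρ) ≤ K * N ^ (2 / ρ)) :
    LqLrNorm q r u ≤ K ^ q.toReal⁻¹ * N := by
  have hr : r⁻¹ ≤ 1 / 2 := (le_add_left le_rfl).trans hadm
  rw [LqLrNorm]
  split_ifs with htop
  · rw [htop, ENNReal.toReal_top, inv_zero, ENNReal.rpow_zero, one_mul]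
    refine essSup_le_of_ae_le N (ae_of_all _ fun t => ?_)
    have hθ := ENNReal.toReal_mono (by simp) hr
    rw [ENNReal.toReal_div, ENNReal.toReal_one, ENNReal.toReal_ofNat] at hθ
    simpa using lrNormZ_rpow_le hr le_rfl zero_le_one (by linarith) (hcons t)
  have hp : 0 < 2 / ρ := by positivity
  have hpQ := two_div_le_mul_of_admissible hρ htop hadm
  set Q := q.toReal
  set p := 2 / ρ
  have hQ0 : 0 < Q := ENNReal.toReal_nonneg.lt_of_ne' fun hQ =>
    hp.not_ge (hpQ.trans_eq (mul_eq_zero_of_left hQ _))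
  have hQp : p ≤ Q := hpQ.trans (mul_le_of_le_one_right hQ0.le (by linarith [r⁻¹.toReal_nonneg]))
  have hpow : ∫⁻ t, lrNormZ r (u t) ^ Q ≤ K * N ^ Q :=
    calc ∫⁻ t, lrNormZ r (u t) ^ Q ≤ ∫⁻ t, N ^ (Q - p) * (⨆ n, ‖u t n‖ₑ) ^ p :=
          lintegral_mono fun t => lrNormZ_rpow_le hr hp.le hQ0.le hpQ (hcons t)
      _ = N ^ (Q - p) * ∫⁻ t, (⨆ n, ‖u t n‖ₑ) ^ p :=
          lintegral_const_mul' _ _ (ENNReal.rpow_ne_top_of_nonneg (sub_nonneg.2 hQp) hN)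
      _ ≤ N ^ (Q - p) * (K * N ^ p) := by gcongr
      _ = K * N ^ Q := by
          rw [mul_left_comm, ← ENNReal.rpow_add_of_nonneg _ _ (sub_nonneg.2 hQp) hp.le,
            sub_add_cancel]
  calc (∫⁻ t, lrNormZ r (u t) ^ Q) ^ (1 / Q) ≤ (K * N ^ Q) ^ (1 / Q) := by gcongr
    _ = K ^ Q⁻¹ * N := by
        rw [ENNReal.mul_rpow_of_nonneg _ _ (by positivity), ← ENNReal.rpow_mul,
          mul_one_div_cancel hQ0.ne', ENNReal.rpow_one, one_div]

end Interpolation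

/-! ### The Strichartz estimate -/

theorem tsum_enorm_inner_sq_le {H ι : Type*} [NormedAddCommGroup H] [InnerProductSpace ℂ H]
    {v : ι → H} (hv : Orthonormal ℂ v) (f : H) : ∑' i, ‖inner ℂ (v i) f‖ₑ ^ 2 ≤ ‖f‖ₑ ^ 2 := by
  simp_rw [← ofReal_norm, ← ENNReal.ofReal_pow (norm_nonneg _)]
  rw [← ENNReal.ofReal_tsum_of_nonneg (fun i => sq_nonneg _) (hv.inner_products_summable f)]
  exact ENNReal.ofReal_le_ofReal (hv.tsum_inner_products_le f)

theorem endpointConst_ne_top {ρ : ℝ} {A : ℝ≥0∞} (hA : A ≠ ⊤) : endpointConst ρ A ≠ ⊤ :=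
  ENNReal.mul_ne_top ENNReal.ofNat_ne_top (ENNReal.mul_ne_top hA ENNReal.ofReal_ne_top)

section Strichartz

variable {α ρ C : ℝ}

theorem exists_lintegral_iSup_enorm_inner_planeWave_le (hα : 0 < α) (hρ0 : 0 < ρ) (hρ : ρ < 1)
    (h : OscDecay (sigma1 α) 0 Real.pi ρ C) :
    ∃ K : ℝ≥0∞, K ≠ ⊤ ∧ ∀ f, ∫⁻ t, (⨆ n, ‖inner ℂ (planeWave (sigmaMap hα) t n) f‖ₑ) ^ (2 / ρ) ≤
      K * ‖f‖ₑ ^ (2 / ρ) := by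
  set A := ENNReal.ofReal (max C 1) * ENNReal.ofReal (2 / (1 - ρ) + 1)
  have hA : A ≠ ⊤ := ENNReal.mul_ne_top ENNReal.ofReal_ne_top ENNReal.ofReal_ne_top
  refine ⟨2 ^ (2 / ρ) * endpointConst ρ A ^ ρ⁻¹, ENNReal.mul_ne_top
    (ENNReal.rpow_ne_top_of_nonneg (by positivity) ENNReal.ofNat_ne_top)
    (ENNReal.rpow_ne_top_of_nonneg (by positivity) (endpointConst_ne_top hA)), fun f => ?_⟩
  refine (lintegral_iSup_enorm_inner_rpow_le (A := A) hρ0 hρ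
    (fun n => (continuous_planeWave _ n).stronglyMeasurable)
    (fun t n => ((orthonormal_planeWave hα t).1 n).le)
    (enorm_inner_planeWave_le hα hρ0 h) (fun t E _ => ?_) f).trans_eq ?_
  · rw [lintegral_const_mul' _ _ ENNReal.ofReal_ne_top, mul_assoc]
    gcongr
    exact setLIntegral_enorm_sub_rpow_neg_le hρ0 hρ t E
  · rw [ENNReal.mul_rpow_of_nonneg _ _ (inv_nonneg.2 hρ0.le), ← ENNReal.rpow_two,
      ← ENNReal.rpow_mul, mul_comm (_ ^ (2 * ρ⁻¹)), mul_assoc, ← div_eq_mul_inv]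

theorem exists_LqLrNorm_Uprop_le (hα : 0 < α) (hρ0 : 0 < ρ) (hρ : ρ < 1)
    (h : OscDecay (sigma1 α) 0 Real.pi ρ C) {q r : ℝ≥0∞}
    (hadm : ENNReal.ofReal ρ⁻¹ / q + r⁻¹ ≤ 1 / 2) :
    ∃ C : ℝ, 0 < C ∧ ∀ φ : ℤ → ℂ, Summable (fun n => ‖φ n‖ ^ 2) →
      LqLrNorm q r (fun t => Uprop α t φ) ≤ ENNReal.ofReal (C * √(∑' n, ‖φ n‖ ^ 2)) := by
  obtain ⟨K, hK, hend⟩ := exists_lintegral_iSup_enorm_inner_planeWave_le hα hρ0 hρ h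
  have hKq : K ^ q.toReal⁻¹ ≠ ⊤ := ENNReal.rpow_ne_top_of_nonneg (by positivity) hK
  refine ⟨(K ^ q.toReal⁻¹).toReal + 1, by positivity, fun φ hφ => ?_⟩
  obtain ⟨f, hf, hU⟩ := exists_inner_planeWave_eq_Uprop hα hφ
  have hcons (t : ℝ) := tsum_enorm_inner_sq_le (orthonormal_planeWave hα t) f
  have hendf := hend f
  simp only [hU] at hcons hendf
  calc LqLrNorm q r (fun t => Uprop α t φ) ≤ K ^ q.toReal⁻¹ * ‖f‖ₑ :=
        LqLrNorm_le_of_endpoint hρ0 hadm enorm_ne_top hcons hendf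
    _ = ENNReal.ofReal ((K ^ q.toReal⁻¹).toReal * √(∑' n, ‖φ n‖ ^ 2)) := by
        rw [ENNReal.ofReal_mul ENNReal.toReal_nonneg, ENNReal.ofReal_toReal hKq, ← hf, ofReal_norm]
    _ ≤ ENNReal.ofReal (((K ^ q.toReal⁻¹).toReal + 1) * √(∑' n, ‖φ n‖ ^ 2)) := by
        gcongr
        exact le_add_of_nonneg_right zero_le_one

end Strichartz

end

theorem stmt17 (α : ℝ) (hα : 0 < α) (q r : ℝ≥0∞)
    (hq : 2 ≤ q) (hr : 2 ≤ r)
    (hadmP : 1 < α → 3 / q + 1 / r ≤ 1 / 2)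
    (hadmM : α ≤ 1 → 2 / q + 1 / r ≤ 1 / 2) :
    ∃ C : ℝ, 0 < C ∧
      ∀ φ : ℤ → ℂ, Summable (fun n : ℤ => ‖φ n‖ ^ 2) →
        LqLrNorm q r (fun t => Uprop α t φ) ≤
          ENNReal.ofReal (C * Real.sqrt (∑' n : ℤ, ‖φ n‖ ^ 2)) := by
  rcases lt_or_ge 1 α with hα1 | hα1
  · obtain ⟨C, hC⟩ := exists_oscDecay_sigma1_of_one_lt hα1
    exact exists_LqLrNorm_Uprop_le hα (by norm_num) (by norm_num) hC (by simpa using hadmP hα1)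
  · obtain ⟨C, hC⟩ := exists_oscDecay_sigma1_of_le_one hα hα1
    exact exists_LqLrNorm_Uprop_le hα (by norm_num) (by norm_num) hC (by simpa using hadmM hα1)
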